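/- arXiv:2310.02244 — 5 statements merged into one kernel-verified Lean document; each statement's English description precedes it below -/
import Mathlib

section
/- Let W_1, W_2, … be i.i.d. standard Gaussian random variables. Then the product Π_{k=1}^{L}(1 + W_k/√L) converges in distribution, as L → ∞, to the log-normal random variable exp(Z − 1/2), where Z is standard Gaussian. -/
open MeasureTheory ProbabilityTheory Filter Topology

/-- The joint law of `L` i.i.d. standard Gaussian random variables `W_1, …, W_L`,
realized canonically on `Fin L → ℝ`. -/
noncomputable def stdGaussPi (L : ℕ) : Measure (Fin L → ℝ) :=
  Measure.pi fun _ => gaussianReal 0 1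

lemma log_taylor_bound {t : ℝ} (h : |t| ≤ 1 / 2) :
    |Real.log (1 + t) - t + t ^ 2 / 2| ≤ 2 * |t| ^ 3 := by
  have h1 : |(-t)| < 1 := by rw [abs_neg]; linarith
  have := Real.abs_log_sub_add_sum_range_le h1 2
  simp only [Finset.sum_range_succ, Finset.sum_range_zero, abs_neg] at this
  norm_num at this
  have e : -t + t ^ 2 / 2 + Real.log (1 + t) = Real.log (1 + t) - t + t ^ 2 / 2 := by ring
  rw [e] at this
  refine this.trans ?_
  rw [div_le_iff₀ (by linarith)]
  have : 0 ≤ |t| ^ 3 := by positivity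
  nlinarith

lemma det_limit (x : ℕ → ℝ) (c : ℝ)
    (h2 : Tendsto (fun n : ℕ => (∑ i ∈ Finset.range n, x i ^ 2) / n) atTop (𝓝 1))
    (h3 : Tendsto (fun n : ℕ => (∑ i ∈ Finset.range n, |x i| ^ 3) / n) atTop (𝓝 c)) :
    Tendsto (fun n : ℕ => Real.exp (-((√(n : ℝ))⁻¹ * ∑ k ∈ Finset.range n, x k)) *
      ∏ k ∈ Finset.range n, (1 + x k / √(n : ℝ))) atTop (𝓝 (Real.exp (-(1 / 2)))) := by
  have hs : Tendsto (fun n : ℕ => (√(n : ℝ))⁻¹) atTop (𝓝 0) :=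
    tendsto_inv_atTop_zero.comp (Real.tendsto_sqrt_atTop.comp tendsto_natCast_atTop_atTop)
  have hA : Tendsto (fun n : ℕ => ∑ k ∈ Finset.range n, |x k / √(n : ℝ)| ^ 3) atTop (𝓝 0) := by
    have := h3.mul hs
    rw [mul_zero] at this
    refine this.congr fun n => ?_
    rw [Finset.sum_div, Finset.sum_mul]
    refine Finset.sum_congr rfl fun k _ => ?_
    rw [abs_div, div_pow, abs_of_nonneg (Real.sqrt_nonneg _), pow_succ (√(n : ℝ)) 2,
      Real.sq_sqrt (Nat.cast_nonneg n), ← div_div, ← div_eq_mul_inv]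
  have hsmall : ∀ᶠ n : ℕ in atTop, ∀ k ∈ Finset.range n, |x k / √(n : ℝ)| ≤ 1 / 2 := by
    filter_upwards [hA.eventually_lt_const (show (0 : ℝ) < (1 / 2) ^ 3 by norm_num)]
      with n hn k hk
    have : |x k / √(n : ℝ)| ^ 3 ≤ (1 / 2) ^ 3 :=
      (Finset.single_le_sum (f := fun k => |x k / √(n : ℝ)| ^ 3)
        (fun i _ => by positivity) hk).trans hn.le
    exact le_of_pow_le_pow_left₀ (by norm_num) (by norm_num) this
  have hE : Tendsto (fun n : ℕ => ∑ k ∈ Finset.range n,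
      (Real.log (1 + x k / √(n : ℝ)) - x k / √(n : ℝ) + (x k / √(n : ℝ)) ^ 2 / 2))
      atTop (𝓝 0) := by
    have h2A := hA.const_mul 2
    rw [mul_zero] at h2A
    refine squeeze_zero_norm' ?_ h2A
    filter_upwards [hsmall] with n hn
    rw [Finset.mul_sum]
    refine (norm_sum_le _ _).trans (Finset.sum_le_sum fun k hk => ?_)
    exact log_taylor_bound (hn k hk)
  have hlim := (hE.sub (h2.div_const 2)).rexp
  rw [zero_sub] at hlim
  refine hlim.congr' ?_
  filter_upwards [hsmall] with n hn
  have hpos : ∀ k ∈ Finset.range n, 0 < 1 + x k / √(n : ℝ) := fun k hk => by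
    have := (abs_le.1 (hn k hk)).1
    linarith
  have hprod : ∏ k ∈ Finset.range n, (1 + x k / √(n : ℝ)) =
      Real.exp (∑ k ∈ Finset.range n, Real.log (1 + x k / √(n : ℝ))) := by
    rw [Real.exp_sum]
    exact Finset.prod_congr rfl fun k hk => (Real.exp_log (hpos k hk)).symm
  rw [hprod, ← Real.exp_add, Finset.sum_add_distrib, Finset.sum_sub_distrib]
  congr 1
  have e1 : ∑ k ∈ Finset.range n, (x k / √(n : ℝ)) ^ 2 / 2 =
      (∑ k ∈ Finset.range n, x k ^ 2) / n / 2 := by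
    rw [Finset.sum_div, Finset.sum_div]
    refine Finset.sum_congr rfl fun k _ => ?_
    rw [div_pow, Real.sq_sqrt (Nat.cast_nonneg n)]
  have e2 : ∑ k ∈ Finset.range n, x k / √(n : ℝ) = (√(n : ℝ))⁻¹ * ∑ k ∈ Finset.range n, x k := by
    rw [← Finset.sum_div, div_eq_inv_mul]
  rw [e1, e2]
  ring

/-- For i.i.d. standard Gaussians `W_1, W_2, …`, the product
`∏_{k=1}^{L}(1 + W_k/√L)` converges in distribution, as `L → ∞`, to the log-normal
random variable `exp(Z − 1/2)` with `Z` standard Gaussian: tested against every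
bounded continuous function. -/
theorem stmt_3 (φ : BoundedContinuousFunction ℝ ℝ) :
    Filter.Tendsto
      (fun L : ℕ => ∫ ω, φ (∏ k, (1 + ω k / Real.sqrt L)) ∂(stdGaussPi L))
      Filter.atTop
      (𝓝 (∫ z, φ (Real.exp (z - 1 / 2)) ∂(gaussianReal 0 1))) := by
  obtain ⟨Ω, mΩ, P, X, hXm, hXl, hXi, hP⟩ := exists_iid ℕ (gaussianReal 0 1)
  have hident : ∀ i, IdentDistrib (X i) (X 0) P P := fun i =>
    ⟨(hXm i).aemeasurable, (hXm 0).aemeasurable, by rw [(hXl i).map_eq, (hXl 0).map_eq]⟩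
  have hmem : ∀ p : ENNReal, p ≠ ⊤ → MemLp (X 0) p P := fun p hp => by
    have := memLp_id_gaussianReal' (μ := 0) (v := 1) p hp
    rw [← (hXl 0).map_eq] at this
    exact (memLp_map_measure_iff (by fun_prop) (hXm 0).aemeasurable).1 this
  have h0 : P[X 0] = 0 := by
    rw [(hXl 0).integral_eq]
    exact integral_id_gaussianReal
  have h1 : P[X 0 ^ 2] = 1 := by
    have hv := variance_eq_sub (hmem 2 (by simp))
    rw [h0, (hXl 0).variance_eq, variance_id_gaussianReal] at hv
    simpa using hv.symm
  have hclt := tendstoInDistribution_inv_sqrt_mul_sum (Y := (id : ℝ → ℝ))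
    (P' := gaussianReal 0 1) HasLaw.id h0 h1 hXi hident
  have hsl2 := strong_law_ae_real (μ := P) (fun i ω => X i ω ^ 2)
    ((hmem 2 (by simp)).integrable_sq)
    (fun i j hij => (hXi.indepFun hij).comp (φ := fun x => x ^ 2) (ψ := fun x => x ^ 2)
      (by fun_prop) (by fun_prop))
    (fun i => (hident i).comp (u := fun x => x ^ 2) (by fun_prop))
  have hsl3 := strong_law_ae_real (μ := P) (fun i ω => |X i ω| ^ 3)
    ((hmem 3 (by simp)).integrable_norm_pow (by norm_num))
    (fun i j hij => (hXi.indepFun hij).comp (φ := fun x => |x| ^ 3) (ψ := fun x => |x| ^ 3)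
      (by fun_prop) (by fun_prop))
    (fun i => (hident i).comp (u := fun x => |x| ^ 3) (by fun_prop))
  have hRm : ∀ n : ℕ, Measurable (fun ω =>
      Real.exp (-((√(n : ℝ))⁻¹ * ∑ k ∈ Finset.range n, X k ω)) *
      ∏ k ∈ Finset.range n, (1 + X k ω / √(n : ℝ))) := fun n => by fun_prop
  have hR : TendstoInMeasure P (fun (n : ℕ) ω =>
      Real.exp (-((√(n : ℝ))⁻¹ * ∑ k ∈ Finset.range n, X k ω)) *
      ∏ k ∈ Finset.range n, (1 + X k ω / √(n : ℝ))) atTop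
      (fun _ => Real.exp (-(1 / 2))) := by
    refine tendstoInMeasure_of_tendsto_ae (fun n => (hRm n).aestronglyMeasurable) ?_
    filter_upwards [hsl2, hsl3] with ω w2 w3
    refine det_limit (fun k => X k ω) _ ?_ w3
    have : P[fun ω => X 0 ω ^ 2] = 1 := h1
    simpa only [this] using w2
  have hfin := hclt.continuous_comp_prodMk_of_tendstoInMeasure_const
    (g := fun p : ℝ × ℝ => Real.exp p.1 * p.2) (by fun_prop) hR
    (fun n => (hRm n).aemeasurable)
  have key := ProbabilityMeasure.tendsto_iff_forall_integral_tendsto.1 hfin.tendsto φ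
  simp only [ProbabilityMeasure.coe_mk] at key
  rw [integral_map (by fun_prop) (by fun_prop)] at key
  have hlimeq : ∫ z, φ (Real.exp (z - 1 / 2)) ∂(gaussianReal 0 1) =
      ∫ z, φ (Real.exp (id z) * Real.exp (-(1 / 2))) ∂(gaussianReal 0 1) := by
    simp only [id, ← Real.exp_add, sub_eq_add_neg]
  rw [hlimeq]
  refine key.congr fun n => ?_
  rw [integral_map (hfin.forall_aemeasurable n) (by fun_prop)]
  have hlaw : HasLaw (fun ω (i : Fin n) => X i ω) (stdGaussPi n) P :=
    iIndepFun.hasLaw_pi (fun i : Fin n => hXl i) (hXi.precomp Fin.val_injective)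
  rw [← hlaw.map_eq, integral_map hlaw.aemeasurable
    (Measurable.aestronglyMeasurable (by fun_prop))]
  refine integral_congr_ae (ae_of_all _ fun ω => ?_)
  simp only
  rw [← mul_assoc, ← Real.exp_add, add_neg_cancel, Real.exp_zero, one_mul,
    Finset.prod_range (fun k => 1 + X k ω / √(n : ℝ))]
end

section
/- Linear residual network at initialization: fix integers n, L ≥ 1, a real α, and a nonzero vector x⁰ ∈ ℝⁿ; let W¹, …, W^L be independent n×n random matrices with i.i.d. N(0, 1/n) entries, and define h^l := W^l x^{l−1} and x^l := x^{l−1} + L^{−α} h^l for l = 1, …, L. Then for every 1 ≤ l ≤ L, E‖x^l‖² = (1 + L^{−2α})^l · ‖x⁰‖² and E‖h^l‖² = (1 + L^{−2α})^{l−1} · ‖x⁰‖². -/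
open MeasureTheory ProbabilityTheory Finset
open scoped NNReal

/-- The joint law of `L` independent `n × n` random matrices `W¹, …, W^L` with
i.i.d. `N(0, 1/n)` entries, realized canonically on `Fin L → Fin n → Fin n → ℝ`. -/
noncomputable def gaussMats (n L : ℕ) : Measure (Fin L → Fin n → Fin n → ℝ) :=
  Measure.pi fun _ => Measure.pi fun _ => Measure.pi fun _ => gaussianReal 0 (n : ℝ≥0)⁻¹

instance gaussMats_prob (n L : ℕ) : IsProbabilityMeasure (gaussMats n L) := by
  unfold gaussMats; infer_instance

lemma gm_row (n L : ℕ) (l : Fin L) (i : Fin n) :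
    MeasurePreserving (fun ω : Fin L → Fin n → Fin n → ℝ => ω l i) (gaussMats n L)
      (Measure.pi fun _ : Fin n => gaussianReal 0 (n : ℝ≥0)⁻¹) := by
  have h1 := measurePreserving_eval (fun _ : Fin L => Measure.pi fun _ : Fin n =>
    Measure.pi fun _ : Fin n => gaussianReal 0 (n : ℝ≥0)⁻¹) l
  have h2 := measurePreserving_eval (fun _ : Fin n =>
    Measure.pi fun _ : Fin n => gaussianReal 0 (n : ℝ≥0)⁻¹) i
  exact h2.comp h1

lemma gm_entry (n L : ℕ) (l : Fin L) (i j : Fin n) :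
    MeasurePreserving (fun ω : Fin L → Fin n → Fin n → ℝ => ω l i j) (gaussMats n L)
      (gaussianReal 0 (n : ℝ≥0)⁻¹) :=
  (measurePreserving_eval (fun _ : Fin n => gaussianReal 0 (n : ℝ≥0)⁻¹) j).comp (gm_row n L l i)

lemma gm_memLp (n L : ℕ) (l : Fin L) (i j : Fin n) :
    MemLp (fun ω : Fin L → Fin n → Fin n → ℝ => ω l i j) 2 (gaussMats n L) :=
  (memLp_id_gaussianReal' 2 (by simp)).comp_measurePreserving (gm_entry n L l i j)

lemma gm_mean (n L : ℕ) (l : Fin L) (i j : Fin n) :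
    ∫ ω, ω l i j ∂(gaussMats n L) = 0 := by
  have h := gm_entry n L l i j
  have := integral_map (μ := gaussMats n L) h.measurable.aemeasurable (f := fun x : ℝ => x)
    (by fun_prop)
  rw [← this, h.map_eq, integral_id_gaussianReal]

lemma gm_indep (n L : ℕ) (l : Fin L) (i j k : Fin n) (hjk : j ≠ k) :
    IndepFun (fun ω : Fin L → Fin n → Fin n → ℝ => ω l i j) (fun ω => ω l i k)
      (gaussMats n L) := by
  have h := iIndepFun_pi (μ := fun _ : Fin n => gaussianReal 0 (n : ℝ≥0)⁻¹)
    (X := fun _ x => x) (fun _ => by fun_prop)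
  have h2 := h.indepFun hjk
  rw [← (gm_row n L l i).map_eq] at h2
  rw [indepFun_iff_map_prod_eq_prod_map_map
    (Measurable.aemeasurable (by fun_prop)) (Measurable.aemeasurable (by fun_prop))] at h2 ⊢
  rw [Measure.map_map (by fun_prop) (by fun_prop), Measure.map_map (by fun_prop) (by fun_prop),
    Measure.map_map (by fun_prop) (by fun_prop)] at h2
  exact h2

lemma gm_cov (n L : ℕ) (l : Fin L) (i j k : Fin n) :
    ∫ ω, ω l i j * ω l i k ∂(gaussMats n L) = if j = k then (n : ℝ)⁻¹ else 0 := by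
  split_ifs with hjk
  · subst hjk
    have h := gm_entry n L l i j
    have := integral_map (μ := gaussMats n L) h.measurable.aemeasurable (f := fun x : ℝ => x * x)
      (by fun_prop)
    rw [← this, h.map_eq]
    have hv := variance_of_integral_eq_zero (μ := gaussianReal 0 (n : ℝ≥0)⁻¹) (X := fun x => x)
      (by fun_prop) integral_id_gaussianReal
    rw [variance_fun_id_gaussianReal] at hv
    simp only [← pow_two]
    rw [← hv]; simp
  · rw [(gm_indep n L l i j k hjk).integral_fun_mul_eq_mul_integral
      (gm_memLp n L l i j).1 (gm_memLp n L l i k).1, gm_mean, zero_mul]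

lemma gm_indep_past (n L : ℕ) (l : Fin L) (Y : (Fin L → Fin n → Fin n → ℝ) → Fin n → ℝ)
    (hY : Measurable Y)
    (hdep : ∀ ω ω', (∀ k : Fin L, k < l → ω k = ω' k) → Y ω = Y ω') :
    IndepFun (fun ω => ω l) Y (gaussMats n L) := by
  have h := iIndepFun_pi (μ := fun _ : Fin L => Measure.pi fun _ : Fin n =>
    Measure.pi fun _ : Fin n => gaussianReal 0 (n : ℝ≥0)⁻¹)
    (X := fun _ x => x) (fun _ => by fun_prop)
  have h2 := h.indepFun_finset {l} (Finset.univ.filter (· < l)) (by simp)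
    (fun i => by fun_prop)
  let g : ((Finset.univ.filter (· < l) : Finset (Fin L)) → Fin n → Fin n → ℝ) →
      Fin L → Fin n → Fin n → ℝ :=
    fun v k => if hk : k < l then v ⟨k, by simp [hk]⟩ else 0
  have hg : Measurable g := by
    refine measurable_pi_lambda _ fun k => ?_
    by_cases hk : k < l
    · simp only [g, hk, dite_true]; fun_prop
    · simp only [g, hk, dite_false]; fun_prop
  have hp : Measurable (fun v : (({l} : Finset (Fin L)) → Fin n → Fin n → ℝ) =>
      v ⟨l, by simp⟩) := by fun_prop
  have h3 := h2.comp hp (hY.comp hg)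
  have e : Y = (Y ∘ g) ∘ fun (a : Fin L → Fin n → Fin n → ℝ)
      (i : (Finset.univ.filter (· < l) : Finset (Fin L))) => a i := by
    funext ω
    refine hdep _ _ fun k hk => ?_
    simp [g, hk]
  rw [e]
  exact h3

lemma gm_step (n L : ℕ) (hn : 1 ≤ n) (l : Fin L)
    (Y : (Fin L → Fin n → Fin n → ℝ) → Fin n → ℝ)
    (hY : Measurable Y)
    (hdep : ∀ ω ω', (∀ k : Fin L, k < l → ω k = ω' k) → Y ω = Y ω')
    (hL2 : ∀ i, MemLp (fun ω => Y ω i) 2 (gaussMats n L)) :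
    (∀ i, MemLp (fun ω => Matrix.mulVec (Matrix.of (ω l)) (Y ω) i) 2 (gaussMats n L)) ∧
    (∫ ω, (∑ i, (Matrix.mulVec (Matrix.of (ω l)) (Y ω) i) ^ 2) ∂(gaussMats n L) =
      ∫ ω, (∑ i, (Y ω i) ^ 2) ∂(gaussMats n L)) ∧
    (∀ i, ∫ ω, Y ω i * Matrix.mulVec (Matrix.of (ω l)) (Y ω) i ∂(gaussMats n L) = 0) := by
  have hind := gm_indep_past n L l Y hY hdep
  have hYY : ∀ j k, Integrable (fun ω => Y ω j * Y ω k) (gaussMats n L) := fun j k =>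
    (hL2 j).integrable_mul (hL2 k)
  have hWW : ∀ i j k, Integrable (fun ω : Fin L → Fin n → Fin n → ℝ => ω l i j * ω l i k)
      (gaussMats n L) := fun i j k => (gm_memLp n L l i j).integrable_mul (gm_memLp n L l i k)
  have i2 : ∀ i j k, IndepFun (fun ω : Fin L → Fin n → Fin n → ℝ => ω l i j * ω l i k)
      (fun ω => Y ω j * Y ω k) (gaussMats n L) := fun i j k =>
    hind.comp (φ := fun w : Fin n → Fin n → ℝ => w i j * w i k)
      (ψ := fun y : Fin n → ℝ => y j * y k) (by fun_prop) (by fun_prop)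
  have i1 : ∀ i j, IndepFun (fun ω : Fin L → Fin n → Fin n → ℝ => ω l i j)
      (fun ω => Y ω i * Y ω j) (gaussMats n L) := fun i j =>
    hind.comp (φ := fun w : Fin n → Fin n → ℝ => w i j)
      (ψ := fun y : Fin n → ℝ => y i * y j) (by fun_prop) (by fun_prop)
  have I2 : ∀ i j k, Integrable (fun ω => (ω l i j * ω l i k) * (Y ω j * Y ω k))
      (gaussMats n L) := fun i j k => (i2 i j k).integrable_mul (hWW i j k) (hYY j k)
  have I1 : ∀ i j, Integrable (fun ω => ω l i j * (Y ω i * Y ω j))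
      (gaussMats n L) := fun i j =>
    (i1 i j).integrable_mul ((gm_memLp n L l i j).integrable (by norm_num)) (hYY i j)
  have e2 : ∀ i ω, (Matrix.mulVec (Matrix.of (ω l)) (Y ω) i) ^ 2 =
      ∑ j, ∑ k, (ω l i j * ω l i k) * (Y ω j * Y ω k) := by
    intro i ω
    simp only [Matrix.mulVec, dotProduct, Matrix.of_apply, pow_two, Finset.sum_mul_sum]
    exact Finset.sum_congr rfl fun j _ => Finset.sum_congr rfl fun k _ => by ring
  have e1 : ∀ i ω, Y ω i * Matrix.mulVec (Matrix.of (ω l)) (Y ω) i =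
      ∑ j, ω l i j * (Y ω i * Y ω j) := by
    intro i ω
    simp only [Matrix.mulVec, dotProduct, Matrix.of_apply, Finset.mul_sum]
    exact Finset.sum_congr rfl fun j _ => by ring
  have J2 : ∀ i, Integrable (fun ω => (Matrix.mulVec (Matrix.of (ω l)) (Y ω) i) ^ 2)
      (gaussMats n L) := by
    intro i
    simp only [e2]
    exact integrable_finsetSum _ fun j _ => integrable_finsetSum _ fun k _ => I2 i j k
  refine ⟨fun i => ?_, ?_, fun i => ?_⟩
  · refine (memLp_two_iff_integrable_sq (Measurable.aestronglyMeasurable ?_)).2 (J2 i)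
    simp only [Matrix.mulVec, dotProduct, Matrix.of_apply]
    fun_prop
  · rw [integral_finsetSum _ fun i _ => J2 i, integral_finsetSum _ fun i _ => (hL2 i).integrable_sq]
    have : ∀ i, ∫ ω, (Matrix.mulVec (Matrix.of (ω l)) (Y ω) i) ^ 2 ∂(gaussMats n L) =
        (n : ℝ)⁻¹ * ∑ j, ∫ ω, (Y ω j) ^ 2 ∂(gaussMats n L) := by
      intro i
      simp only [e2]
      rw [integral_finsetSum _ fun j _ => integrable_finsetSum _ fun k _ => I2 i j k,
        Finset.mul_sum]
      refine Finset.sum_congr rfl fun j _ => ?_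
      rw [integral_finsetSum _ fun k _ => I2 i j k]
      have : ∀ k, ∫ ω, (ω l i j * ω l i k) * (Y ω j * Y ω k) ∂(gaussMats n L) =
          if j = k then (n : ℝ)⁻¹ * ∫ ω, Y ω j * Y ω k ∂(gaussMats n L) else 0 := by
        intro k
        rw [(i2 i j k).integral_fun_mul_eq_mul_integral (hWW i j k).1 (hYY j k).1, gm_cov,
          ite_mul, zero_mul]
      simp only [this, Finset.sum_ite_eq, Finset.mem_univ, if_true, pow_two]
    simp only [this, Finset.sum_const, Finset.card_univ, Fintype.card_fin, nsmul_eq_mul]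
    have : (n : ℝ) ≠ 0 := by positivity
    field_simp
  · simp only [e1]
    rw [integral_finsetSum _ fun j _ => I1 i j]
    refine Finset.sum_eq_zero fun j _ => ?_
    rw [(i1 i j).integral_fun_mul_eq_mul_integral (gm_memLp n L l i j).1 (hYY i j).1, gm_mean,
      zero_mul]

/-- For the linear residual network `x^l = x^{l−1} + L^{−α} W^l x^{l−1}`
(`h^l = W^l x^{l−1}`) at initialization, for every `1 ≤ l ≤ L`:
`E‖x^l‖² = (1 + L^{−2α})^l·‖x⁰‖²` and `E‖h^l‖² = (1 + L^{−2α})^{l−1}·‖x⁰‖²`. -/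
theorem stmt_4 (n L : ℕ) (hn : 1 ≤ n) (hL : 1 ≤ L) (α : ℝ)
    (x0 : Fin n → ℝ) (hx0 : x0 ≠ 0)
    (x : ℕ → (Fin L → Fin n → Fin n → ℝ) → Fin n → ℝ)
    (hinit : ∀ ω, x 0 ω = x0)
    (hrec : ∀ ω, ∀ l : ℕ, ∀ h : l < L,
      x (l + 1) ω = x l ω +
        ((L : ℝ) ^ (-α)) • Matrix.mulVec (Matrix.of (ω ⟨l, h⟩)) (x l ω)) :
    ∀ l : ℕ, ∀ hl1 : 1 ≤ l, ∀ hl2 : l ≤ L,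
      (∫ ω, (∑ i, (x l ω i) ^ 2) ∂(gaussMats n L)) =
        (1 + (L : ℝ) ^ (-(2 * α))) ^ l * ∑ i, (x0 i) ^ 2 ∧
      (∫ ω, (∑ i, (Matrix.mulVec (Matrix.of (ω ⟨l - 1, by omega⟩)) (x (l - 1) ω) i) ^ 2)
          ∂(gaussMats n L)) =
        (1 + (L : ℝ) ^ (-(2 * α))) ^ (l - 1) * ∑ i, (x0 i) ^ 2 := by
  have hc : (L : ℝ) ^ (-(2 * α)) = ((L : ℝ) ^ (-α)) ^ 2 := by
    rw [← Real.rpow_natCast, ← Real.rpow_mul (by positivity)]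
    congr 1; push_cast; ring
  rw [hc]
  generalize (L : ℝ) ^ (-α) = c at hrec
  have key : ∀ l : ℕ, l ≤ L → Measurable (x l) ∧
      (∀ ω ω', (∀ k : Fin L, (k : ℕ) < l → ω k = ω' k) → x l ω = x l ω') ∧
      (∀ i, MemLp (fun ω => x l ω i) 2 (gaussMats n L)) ∧
      (∫ ω, (∑ i, (x l ω i) ^ 2) ∂(gaussMats n L)) = (1 + c ^ 2) ^ l * ∑ i, (x0 i) ^ 2 := by
    intro l
    induction l with
    | zero =>
      intro _
      have : x 0 = fun _ => x0 := funext hinit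
      rw [this]
      refine ⟨measurable_const, fun _ _ _ => rfl, fun i => memLp_const _, by simp⟩
    | succ l ih =>
      intro hl
      obtain ⟨hm, hd, h2, hE⟩ := ih (by omega)
      have hl' : l < L := hl
      obtain ⟨s1, s2, s3⟩ := gm_step n L hn ⟨l, hl'⟩ (x l) hm
        (fun ω ω' h => hd ω ω' fun k hk => h k hk) h2
      have hx : x (l + 1) = fun ω => x l ω + c • Matrix.mulVec (Matrix.of (ω ⟨l, hl'⟩)) (x l ω) :=
        funext fun ω => hrec ω l hl'
      rw [hx]
      refine ⟨?_, ?_, ?_, ?_⟩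
      · refine measurable_pi_lambda _ fun i => ?_
        simp only [Matrix.mulVec, dotProduct, Matrix.of_apply, Pi.add_apply, Pi.smul_apply]
        fun_prop
      · intro ω ω' h
        have a1 := hd ω ω' fun k hk => h k (by omega)
        have a2 := h ⟨l, hl'⟩ (by simp)
        simp only [a1, a2]
      · intro i
        exact (h2 i).add ((s1 i).const_smul c)
      · have e : ∀ ω, ∑ i, ((x l ω + c • Matrix.mulVec (Matrix.of (ω ⟨l, hl'⟩)) (x l ω)) i) ^ 2 =
            ∑ i, (x l ω i) ^ 2 +
            (2 * c * ∑ i, x l ω i * Matrix.mulVec (Matrix.of (ω ⟨l, hl'⟩)) (x l ω) i +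
            c ^ 2 * ∑ i, (Matrix.mulVec (Matrix.of (ω ⟨l, hl'⟩)) (x l ω) i) ^ 2) := by
          intro ω
          simp only [Finset.mul_sum, ← Finset.sum_add_distrib]
          refine Finset.sum_congr rfl fun i _ => ?_
          simp only [Pi.add_apply, Pi.smul_apply, smul_eq_mul]
          ring
        have A1 : Integrable (fun ω => ∑ i, (x l ω i) ^ 2) (gaussMats n L) :=
          integrable_finsetSum _ fun i _ => (h2 i).integrable_sq
        have A2' : ∀ i, Integrable (fun ω => x l ω i *
            Matrix.mulVec (Matrix.of (ω ⟨l, hl'⟩)) (x l ω) i) (gaussMats n L) :=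
          fun i => (h2 i).integrable_mul (s1 i)
        have A2 := integrable_finsetSum Finset.univ fun i _ => A2' i
        have A3 := integrable_finsetSum Finset.univ fun i _ => (s1 i).integrable_sq
        have A4 := A2.const_mul (2 * c)
        have A5 := A3.const_mul (c ^ 2)
        have A6 : Integrable (fun ω =>
            2 * c * ∑ i, x l ω i * Matrix.mulVec (Matrix.of (ω ⟨l, hl'⟩)) (x l ω) i +
            c ^ 2 * ∑ i, (Matrix.mulVec (Matrix.of (ω ⟨l, hl'⟩)) (x l ω) i) ^ 2)
            (gaussMats n L) := A4.add A5
        simp only [e]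
        rw [integral_add A1 A6, integral_add A4 A5, integral_const_mul, integral_const_mul,
          s2, hE, integral_finsetSum _ fun i _ => A2' i, Finset.sum_eq_zero fun i _ => s3 i]
        ring
  intro l hl1 hl2
  refine ⟨(key l hl2).2.2.2, ?_⟩
  obtain ⟨hm, hd, h2, hE⟩ := key (l - 1) (by omega)
  rw [← hE]
  exact (gm_step n L hn ⟨l - 1, by omega⟩ (x (l - 1)) hm
        (fun ω ω' h => hd ω ω' fun k hk => h k hk) h2).2.1
end

section
/- Linear residual network at initialization: fix integers n, L ≥ 1, a real α, and a nonzero vector x⁰ ∈ ℝⁿ; let W¹, …, W^L be independent n×n random matrices with i.i.d. N(0, 1/n) entries, and define x^l := x^{l−1} + L^{−α} W^l x^{l−1} for l = 1, …, L. Then sup over positive integers L of E‖x^L‖² is finite if and only if α ≥ 1/2. More precisely, E‖x^L‖² = (1 + L^{−2α})^L‖x⁰‖², which converges to ‖x⁰‖² as L → ∞ if α > 1/2, converges to e·‖x⁰‖² if α = 1/2, and diverges to +∞ if α < 1/2. -/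
open MeasureTheory ProbabilityTheory Finset Filter Topology
open scoped NNReal

/-- The forward pass of the linear residual network at initialization:
`x⁰` is the input and `x^l = x^{l−1} + L^{−α} W^l x^{l−1}` for `1 ≤ l ≤ L`. -/
noncomputable def resX (n : ℕ) (α : ℝ) (x0 : Fin n → ℝ) (L : ℕ)
    (ω : Fin L → Fin n → Fin n → ℝ) : ℕ → Fin n → ℝ
  | 0 => x0
  | l + 1 =>
    resX n α x0 L ω l +
      if h : l < L then
        ((L : ℝ) ^ (-α)) • Matrix.mulVec (Matrix.of (ω ⟨l, h⟩)) (resX n α x0 L ω l)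
      else 0


lemma row_moment (n : ℕ) (v : ℝ≥0) (a c : ℝ) (x : Fin n → ℝ) :
    Integrable (fun r : Fin n → ℝ => (a + c * ∑ j, r j * x j) ^ 2)
      (Measure.pi fun _ => gaussianReal 0 v) ∧
    ∫ r : Fin n → ℝ, (a + c * ∑ j, r j * x j) ^ 2 ∂(Measure.pi fun _ => gaussianReal 0 v) =
      a ^ 2 + c ^ 2 * (v * ∑ j, x j ^ 2) := by
  set μ : Measure (Fin n → ℝ) := Measure.pi fun _ => gaussianReal 0 v with hμ
  have hid : MemLp (fun t : ℝ => t) 2 (gaussianReal 0 v) := memLp_id_gaussianReal 2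
  have hX : ∀ j : Fin n, MemLp (fun t : ℝ => t * x j) 2 (gaussianReal 0 v) := fun j =>
    hid.mul_const (x j)
  have hev : ∀ j : Fin n, MeasurePreserving (fun r : Fin n → ℝ => r j) μ (gaussianReal 0 v) :=
    fun j => measurePreserving_eval (fun _ : Fin n => gaussianReal 0 v) j
  have hY : ∀ j : Fin n, MemLp (fun r : Fin n → ℝ => r j * x j) 2 μ := fun j =>
    (hX j).comp_measurePreserving (hev j)
  have hS : MemLp (fun r : Fin n → ℝ => ∑ j, r j * x j) 2 μ :=
    memLp_finsetSum _ fun j _ => hY j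
  have hT : MemLp (fun r : Fin n → ℝ => a + c * ∑ j, r j * x j) 2 μ :=
    (memLp_const a).add (hS.const_mul c)
  refine ⟨hT.integrable_sq, ?_⟩
  have hmeanj : ∀ j : Fin n, ∫ r, r j * x j ∂μ = 0 := by
    intro j
    rw [integral_mul_const]
    have h := integral_map (μ := μ) (φ := fun r : Fin n → ℝ => r j) (f := fun t : ℝ => t)
      (hev j).measurable.aemeasurable (by fun_prop)
    rw [(hev j).map_eq, integral_id_gaussianReal] at h
    rw [← h, zero_mul]
  have hmean : ∫ r, (a + c * ∑ j, r j * x j) ∂μ = a := by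
    rw [integral_add (integrable_const _) ((hS.integrable one_le_two).const_mul c),
      integral_const_mul, integral_finsetSum _ fun j _ => (hY j).integrable one_le_two]
    simp [hmeanj]
  have hvar : Var[fun r : Fin n → ℝ => a + c * ∑ j, r j * x j; μ] =
      c ^ 2 * (v * ∑ j, x j ^ 2) := by
    rw [variance_const_add (hS.const_mul c).aestronglyMeasurable, variance_const_mul]
    congr 1
    have h := variance_sum_pi hX
    have e : (∑ j, fun r : Fin n → ℝ => r j * x j) = fun r => ∑ j, r j * x j := by
      ext r; simp
    rw [e] at h
    rw [h, Finset.mul_sum]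
    refine Finset.sum_congr rfl fun j _ => ?_
    rw [variance_mul_const, variance_fun_id_gaussianReal]
  have := variance_eq_sub hT
  rw [hvar, hmean] at this
  simp only [Pi.pow_apply] at this
  linarith

lemma layer_lintegral (n : ℕ) (hn : 1 ≤ n) (c : ℝ) (x : Fin n → ℝ) :
    ∫⁻ W : Fin n → Fin n → ℝ, ENNReal.ofReal
        (∑ i, ((x + c • Matrix.mulVec (Matrix.of W) x) i) ^ 2)
      ∂(Measure.pi fun _ => Measure.pi fun _ => gaussianReal 0 (n : ℝ≥0)⁻¹) =
      ENNReal.ofReal ((1 + c ^ 2)) * ENNReal.ofReal (∑ i, x i ^ 2) := by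
  have hev : ∀ i : Fin n, MeasurePreserving (fun W : Fin n → Fin n → ℝ => W i)
      (Measure.pi fun _ => Measure.pi fun _ => gaussianReal 0 (n : ℝ≥0)⁻¹)
      (Measure.pi fun _ => gaussianReal 0 (n : ℝ≥0)⁻¹) := fun i =>
    measurePreserving_eval (fun _ : Fin n => Measure.pi fun _ : Fin n => 
      gaussianReal 0 (n : ℝ≥0)⁻¹) i
  have hrow : ∀ i : Fin n, ∫⁻ W : Fin n → Fin n → ℝ,
      ENNReal.ofReal ((x i + c * ∑ j, W i j * x j) ^ 2)
      ∂(Measure.pi fun _ => Measure.pi fun _ => gaussianReal 0 (n : ℝ≥0)⁻¹) =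
      ENNReal.ofReal (x i ^ 2 + c ^ 2 * (((n : ℝ≥0)⁻¹ : ℝ≥0) * ∑ j, x j ^ 2)) := by
    intro i
    obtain ⟨h1, h2⟩ := row_moment n (n : ℝ≥0)⁻¹ (x i) c x
    rw [← h2, ofReal_integral_eq_lintegral_ofReal h1 (ae_of_all _ fun _ => sq_nonneg _)]
    exact (hev i).lintegral_comp
      (f := fun r : Fin n → ℝ => ENNReal.ofReal ((x i + c * ∑ j, r j * x j) ^ 2))
      (by fun_prop)
  have e : ∀ W : Fin n → Fin n → ℝ,
      ENNReal.ofReal (∑ i, ((x + c • Matrix.mulVec (Matrix.of W) x) i) ^ 2) =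
      ∑ i, ENNReal.ofReal ((x i + c * ∑ j, W i j * x j) ^ 2) := by
    intro W
    rw [ENNReal.ofReal_sum_of_nonneg fun _ _ => sq_nonneg _]
    simp [Matrix.mulVec, dotProduct]
  simp_rw [e]
  rw [lintegral_finsetSum _ fun i _ => by fun_prop]
  simp_rw [hrow]
  rw [← ENNReal.ofReal_sum_of_nonneg fun _ _ => by positivity,
    ← ENNReal.ofReal_mul (by positivity)]
  congr 1
  rw [Finset.sum_add_distrib, Finset.sum_const]
  have : (n : ℝ) ≠ 0 := by positivity
  simp
  field_simp

/-- Forward pass with a fixed multiplier, by recursion on the depth. -/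
noncomputable def rnet (n : ℕ) (c : ℝ) (x0 : Fin n → ℝ) :
    (L : ℕ) → (Fin L → Fin n → Fin n → ℝ) → Fin n → ℝ
  | 0, _ => x0
  | L + 1, ω =>
    rnet n c x0 L (fun j => ω ((Fin.last L).succAbove j)) +
      c • Matrix.mulVec (Matrix.of (ω (Fin.last L)))
        (rnet n c x0 L (fun j => ω ((Fin.last L).succAbove j)))

lemma resX_eq_rnet (n : ℕ) (α : ℝ) (x0 : Fin n → ℝ) (L : ℕ)
    (ω : Fin L → Fin n → Fin n → ℝ) (l : ℕ) (hl : l ≤ L) :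
    resX n α x0 L ω l = rnet n ((L : ℝ) ^ (-α)) x0 l (fun j => ω (Fin.castLE hl j)) := by
  induction l with
  | zero => rfl
  | succ l ih =>
    have h : l < L := hl
    have e : (fun j : Fin l => ω (Fin.castLE hl ((Fin.last l).succAbove j))) =
        fun j => ω (Fin.castLE h.le j) := by
      funext j
      simp only [Fin.succAbove_last]
      rfl
    simp only [resX, rnet, dif_pos h]
    rw [ih h.le, e]
    rfl

lemma measurable_rnet (n : ℕ) (c : ℝ) (x0 : Fin n → ℝ) (L : ℕ) :
    Measurable (rnet n c x0 L) := by
  induction L with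
  | zero => exact measurable_const
  | succ L ih =>
    have h : Measurable fun ω : Fin (L + 1) → Fin n → Fin n → ℝ =>
        rnet n c x0 L (fun j => ω ((Fin.last L).succAbove j)) :=
      ih.comp (measurable_pi_iff.2 fun j => measurable_pi_apply _)
    refine measurable_pi_iff.2 fun i => ?_
    have h' : ∀ j, Measurable fun ω : Fin (L + 1) → Fin n → Fin n → ℝ =>
        rnet n c x0 L (fun j => ω ((Fin.last L).succAbove j)) j := fun j =>
      (measurable_pi_apply j).comp h
    simp only [rnet, Pi.add_apply, Pi.smul_apply, smul_eq_mul, Matrix.mulVec, dotProduct,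
      Matrix.of_apply]
    refine (h' i).add (measurable_const.mul (Finset.measurable_sum _ fun j _ => ?_))
    exact Measurable.mul (by fun_prop) (h' j)

lemma rnet_lintegral (n : ℕ) (hn : 1 ≤ n) (c : ℝ) (x0 : Fin n → ℝ) (L : ℕ) :
    ∫⁻ ω, ENNReal.ofReal (∑ i, (rnet n c x0 L ω i) ^ 2) ∂(gaussMats n L) =
      ENNReal.ofReal (1 + c ^ 2) ^ L * ENNReal.ofReal (∑ i, x0 i ^ 2) := by
  induction L with
  | zero => simp [rnet, gaussMats]
  | succ L ih =>
    set ν : Measure (Fin n → Fin n → ℝ) :=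
      Measure.pi fun _ => Measure.pi fun _ => gaussianReal 0 (n : ℝ≥0)⁻¹ with hν
    have hmp := measurePreserving_piFinSuccAbove (fun _ : Fin (L + 1) => ν) (Fin.last L)
    set G : (Fin n → Fin n → ℝ) × (Fin L → Fin n → Fin n → ℝ) → ENNReal := fun p =>
      ENNReal.ofReal (∑ i, ((rnet n c x0 L p.2 +
        c • Matrix.mulVec (Matrix.of p.1) (rnet n c x0 L p.2)) i) ^ 2) with hG
    have hGm : Measurable G := by
      have h' : ∀ j, Measurable fun p : (Fin n → Fin n → ℝ) × (Fin L → Fin n → Fin n → ℝ) =>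
        rnet n c x0 L p.2 j := fun j =>
        (measurable_pi_apply j).comp ((measurable_rnet n c x0 L).comp measurable_snd)
      simp only [hG, Pi.add_apply, Pi.smul_apply, smul_eq_mul, Matrix.mulVec, dotProduct,
        Matrix.of_apply]
      refine ENNReal.measurable_ofReal.comp (Finset.measurable_sum _ fun i _ => ?_)
      refine Measurable.pow_const ?_ 2
      refine (h' i).add (measurable_const.mul (Finset.measurable_sum _ fun j _ => ?_))
      exact Measurable.mul (by fun_prop) (h' j)
    have h1 : ∫⁻ ω, ENNReal.ofReal (∑ i, (rnet n c x0 (L + 1) ω i) ^ 2)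
        ∂(gaussMats n (L + 1)) = ∫⁻ p, G p ∂(ν.prod (gaussMats n L)) :=
      hmp.lintegral_comp hGm
    have : SFinite (gaussMats n L) := by unfold gaussMats; infer_instance
    rw [h1, lintegral_prod_symm _ hGm.aemeasurable]
    simp only [hG]
    simp_rw [hν, layer_lintegral n hn c]
    rw [lintegral_const_mul' _ _ ENNReal.ofReal_ne_top, ih, pow_succ]
    ring

lemma resX_integral (n : ℕ) (hn : 1 ≤ n) (α : ℝ) (x0 : Fin n → ℝ) (L : ℕ) :
    (∫ ω, (∑ i, (resX n α x0 L ω L i) ^ 2) ∂(gaussMats n L)) =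
        (1 + (L : ℝ) ^ (-(2 * α))) ^ L * ∑ i, (x0 i) ^ 2 := by
  have e : ∀ ω, resX n α x0 L ω L = rnet n ((L : ℝ) ^ (-α)) x0 L ω := fun ω =>
    resX_eq_rnet n α x0 L ω L le_rfl
  simp_rw [e]
  have hm : ∀ i, Measurable fun ω => rnet n ((L : ℝ) ^ (-α)) x0 L ω i := fun i =>
    (measurable_pi_apply i).comp (measurable_rnet n _ x0 L)
  rw [integral_eq_lintegral_of_nonneg_ae (ae_of_all _ fun _ => by positivity)
    (Finset.measurable_sum _ fun i _ => (hm i).pow_const 2).aestronglyMeasurable,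
    rnet_lintegral n hn, ENNReal.toReal_mul, ENNReal.toReal_pow,
    ENNReal.toReal_ofReal (by positivity), ENNReal.toReal_ofReal (by positivity)]
  congr 3
  rw [← Real.rpow_natCast, ← Real.rpow_mul (by positivity)]
  congr 1
  push_cast
  ring

lemma mul_rpow_eq (α : ℝ) (L : ℕ) (hL : 1 ≤ L) :
    (L : ℝ) * (L : ℝ) ^ (-(2 * α)) = (L : ℝ) ^ (1 - 2 * α) := by
  have : (0 : ℝ) < L := by exact_mod_cast hL
  rw [sub_eq_add_neg, Real.rpow_add this, Real.rpow_one]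

lemma lim_gt (α : ℝ) (h : 1 / 2 < α) :
    Tendsto (fun L : ℕ => (1 + (L : ℝ) ^ (-(2 * α))) ^ L) atTop (𝓝 1) := by
  have h0 : Tendsto (fun L : ℕ => (L : ℝ) ^ (1 - 2 * α)) atTop (𝓝 0) := by
    have := (tendsto_rpow_neg_atTop (y := 2 * α - 1) (by linarith)).comp
      (tendsto_natCast_atTop_atTop (R := ℝ))
    simpa [Function.comp_def] using this
  have h1 : Tendsto (fun L : ℕ => Real.exp ((L : ℝ) ^ (1 - 2 * α))) atTop (𝓝 1) := by
    simpa [Function.comp_def] using (Real.continuous_exp.tendsto 0).comp h0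
  refine tendsto_of_tendsto_of_tendsto_of_le_of_le' tendsto_const_nhds h1 ?_ ?_
  · exact Eventually.of_forall fun L => one_le_pow₀ (by
      have : (0 : ℝ) ≤ (L : ℝ) ^ (-(2 * α)) := by positivity
      linarith)
  · filter_upwards [eventually_ge_atTop 1] with L hL
    rw [← mul_rpow_eq α L hL, Real.exp_nat_mul]
    refine pow_le_pow_left₀ (by positivity) ?_ L
    rw [add_comm]
    exact Real.add_one_le_exp _

lemma lim_half : Tendsto (fun L : ℕ => (1 + (L : ℝ) ^ (-(2 * (1 / 2 : ℝ)))) ^ L) atTop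
    (𝓝 (Real.exp 1)) := by
  have := Real.tendsto_one_add_div_pow_exp 1
  refine this.congr fun L => ?_
  norm_num [Real.rpow_neg_one]

lemma lim_lt (α : ℝ) (h : α < 1 / 2) :
    Tendsto (fun L : ℕ => (1 + (L : ℝ) ^ (-(2 * α))) ^ L) atTop atTop := by
  have h0 : Tendsto (fun L : ℕ => (L : ℝ) ^ (1 - 2 * α)) atTop atTop :=
    (tendsto_rpow_atTop (by linarith)).comp (tendsto_natCast_atTop_atTop (R := ℝ))
  refine tendsto_atTop_mono' _ ?_ h0
  filter_upwards [eventually_ge_atTop 1] with L hL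
  have hp : (0 : ℝ) ≤ (L : ℝ) ^ (-(2 * α)) := by positivity
  have := one_add_mul_le_pow (a := (L : ℝ) ^ (-(2 * α))) (by linarith) L
  rw [mul_rpow_eq α L hL] at this
  linarith

/-- `E‖x^L‖² = (1 + L^{−2α})^L‖x⁰‖²`; the supremum over depths `L ≥ 1`
is finite iff `α ≥ 1/2`; the limit is `‖x⁰‖²` if `α > 1/2`, `e·‖x⁰‖²` if `α = 1/2`,
and `+∞` if `α < 1/2`. -/
theorem stmt_5 (n : ℕ) (hn : 1 ≤ n) (α : ℝ) (x0 : Fin n → ℝ) (hx0 : x0 ≠ 0) :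
    ((∃ M : ℝ, ∀ L : ℕ, 1 ≤ L →
        (∫ ω, (∑ i, (resX n α x0 L ω L i) ^ 2) ∂(gaussMats n L)) ≤ M) ↔ 1 / 2 ≤ α) ∧
    (∀ L : ℕ, 1 ≤ L →
      (∫ ω, (∑ i, (resX n α x0 L ω L i) ^ 2) ∂(gaussMats n L)) =
        (1 + (L : ℝ) ^ (-(2 * α))) ^ L * ∑ i, (x0 i) ^ 2) ∧
    (1 / 2 < α →
      Tendsto (fun L : ℕ => ∫ ω, (∑ i, (resX n α x0 L ω L i) ^ 2) ∂(gaussMats n L))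
        atTop (𝓝 (∑ i, (x0 i) ^ 2))) ∧
    (α = 1 / 2 →
      Tendsto (fun L : ℕ => ∫ ω, (∑ i, (resX n α x0 L ω L i) ^ 2) ∂(gaussMats n L))
        atTop (𝓝 (Real.exp 1 * ∑ i, (x0 i) ^ 2))) ∧
    (α < 1 / 2 →
      Tendsto (fun L : ℕ => ∫ ω, (∑ i, (resX n α x0 L ω L i) ^ 2) ∂(gaussMats n L))
        atTop atTop) := by
  have hS : 0 < ∑ i, x0 i ^ 2 := by
    obtain ⟨i, hi⟩ := Function.ne_iff.1 hx0
    exact Finset.sum_pos' (fun _ _ => sq_nonneg _) ⟨i, Finset.mem_univ i, by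
      have : x0 i ≠ 0 := hi
      positivity⟩
  simp_rw [resX_integral n hn α x0]
  have hgt : 1 / 2 < α → Tendsto (fun L : ℕ =>
      (1 + (L : ℝ) ^ (-(2 * α))) ^ L * ∑ i, (x0 i) ^ 2) atTop (𝓝 (∑ i, (x0 i) ^ 2)) := by
    intro h
    simpa using (lim_gt α h).mul_const (∑ i, (x0 i) ^ 2)
  have heq : α = 1 / 2 → Tendsto (fun L : ℕ =>
      (1 + (L : ℝ) ^ (-(2 * α))) ^ L * ∑ i, (x0 i) ^ 2) atTop
      (𝓝 (Real.exp 1 * ∑ i, (x0 i) ^ 2)) := by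
    rintro rfl
    exact lim_half.mul_const _
  have hlt : α < 1 / 2 → Tendsto (fun L : ℕ =>
      (1 + (L : ℝ) ^ (-(2 * α))) ^ L * ∑ i, (x0 i) ^ 2) atTop atTop := by
    intro h
    exact (lim_lt α h).atTop_mul_const hS
  refine ⟨⟨?_, ?_⟩, fun _ _ => trivial, hgt, heq, hlt⟩
  · rintro ⟨M, hM⟩
    by_contra hα
    obtain ⟨L, hL1, hL⟩ := ((eventually_ge_atTop 1).and
      ((hlt (not_le.1 hα)).eventually_gt_atTop M)).exists
    exact absurd (hM L hL1) (not_le.2 hL)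
  · intro h
    have hb : BddAbove (Set.range fun L : ℕ =>
        (1 + (L : ℝ) ^ (-(2 * α))) ^ L * ∑ i, (x0 i) ^ 2) := by
      rcases h.lt_or_eq with h | h
      · exact (hgt h).bddAbove_range
      · exact (heq h.symm).bddAbove_range
    obtain ⟨M, hM⟩ := hb
    exact ⟨M, fun L _ => hM ⟨L, rfl⟩⟩
end

section
/- Backward pass of a linear residual network at initialization: fix integers n, L ≥ 1, a real α, and a nonzero vector v ∈ ℝⁿ; let W¹, …, W^L be independent n×n random matrices with i.i.d. N(0, 1/n) entries, and define d^L := v and d^{l−1} := d^l + L^{−α}(W^l)ᵀ d^l for l = L, L−1, …, 1. Then for every 0 ≤ l ≤ L, E‖d^l‖² = (1 + L^{−2α})^{L−l} · ‖v‖². In particular sup over L of E‖d^0‖² is finite if and only if α ≥ 1/2. -/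
open MeasureTheory ProbabilityTheory Finset
open scoped NNReal

/-- The backward pass of the linear residual network at initialization, indexed by the
number of steps from the top: `resD … j = d^{L−j}`, where `d^L = v` and
`d^{l−1} = d^l + L^{−α} (W^l)ᵀ d^l`.  (So step `j → j+1` uses `W^{L−j}`, whose 0-based
index is `L − 1 − j`.) -/
noncomputable def resD (n : ℕ) (α : ℝ) (v : Fin n → ℝ) (L : ℕ)
    (ω : Fin L → Fin n → Fin n → ℝ) : ℕ → Fin n → ℝ
  | 0 => v
  | j + 1 =>
    resD n α v L ω j +
      if h : j < L then
        ((L : ℝ) ^ (-α)) •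
          Matrix.mulVec (Matrix.of (ω ⟨L - 1 - j, by omega⟩)).transpose (resD n α v L ω j)
      else 0

lemma step_aux {Ω : Type*} [MeasurableSpace Ω] (μ : Measure Ω) [IsProbabilityMeasure μ]
    (n : ℕ) (hn : 1 ≤ n) (c : ℝ) (d : Fin n → Ω → ℝ) (W : Fin n → Fin n → Ω → ℝ)
    (hd : ∀ a, MemLp (d a) 2 μ) (hW : ∀ a i, MemLp (W a i) 2 μ)
    (hind : IndepFun (fun ω a => d a ω) (fun ω a i => W a i ω) μ)
    (hW0 : ∀ a i, ∫ ω, W a i ω ∂μ = 0)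
    (hW2 : ∀ a b i, ∫ ω, W a i ω * W b i ω ∂μ = if a = b then (n : ℝ)⁻¹ else 0) :
    (∀ i, MemLp (fun ω => d i ω + c * ∑ a, W a i ω * d a ω) 2 μ) ∧
    ∫ ω, (∑ i, (d i ω + c * ∑ a, W a i ω * d a ω) ^ 2) ∂μ
      = (1 + c ^ 2) * ∫ ω, (∑ i, d i ω ^ 2) ∂μ := by
  have hdd : ∀ a b, Integrable (fun ω => d a ω * d b ω) μ := fun a b =>
    (hd a).integrable_mul (hd b)
  have hWW : ∀ a b i, Integrable (fun ω => W a i ω * W b i ω) μ := fun a b i =>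
    (hW a i).integrable_mul (hW b i)
  have hWi : ∀ a i, Integrable (W a i) μ := fun a i => (hW a i).integrable (by norm_num)
  have ind1 : ∀ a b e i, IndepFun (fun ω => d a ω * d b ω) (W e i) μ := fun a b e i =>
    hind.comp (φ := fun x : Fin n → ℝ => x a * x b) (ψ := fun w : Fin n → Fin n → ℝ => w e i)
      (by fun_prop) (by fun_prop)
  have ind2 : ∀ a b e f i, IndepFun (fun ω => d a ω * d b ω) (fun ω => W e i ω * W f i ω) μ :=
    fun a b e f i =>
    hind.comp (φ := fun x : Fin n → ℝ => x a * x b)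
      (ψ := fun w : Fin n → Fin n → ℝ => w e i * w f i)
      (by fun_prop) (by fun_prop)
  have i1 : ∀ a b e i, Integrable (fun ω => d a ω * d b ω * W e i ω) μ := fun a b e i =>
    (ind1 a b e i).integrable_mul (hdd a b) (hWi e i)
  have i2 : ∀ a b e f i, Integrable (fun ω => d a ω * d b ω * (W e i ω * W f i ω)) μ :=
    fun a b e f i => (ind2 a b e f i).integrable_mul (hdd a b) (hWW e f i)
  have v1 : ∀ a b e i, ∫ ω, d a ω * d b ω * W e i ω ∂μ = 0 := fun a b e i => by
    rw [(ind1 a b e i).integral_fun_mul_eq_mul_integral (hdd a b).1 (hWi e i).1, hW0, mul_zero]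
  have v2 : ∀ a b e f i, ∫ ω, d a ω * d b ω * (W e i ω * W f i ω) ∂μ
      = (∫ ω, d a ω * d b ω ∂μ) * if e = f then (n : ℝ)⁻¹ else 0 := fun a b e f i => by
    rw [(ind2 a b e f i).integral_fun_mul_eq_mul_integral (hdd a b).1 (hWW e f i).1, hW2]
  have hsq : ∀ i ω, (d i ω + c * ∑ a, W a i ω * d a ω) ^ 2 =
      (d i ω * d i ω + ∑ a, (2 * c) * (d i ω * d a ω * W a i ω))
        + ∑ a, ∑ b, c ^ 2 * (d a ω * d b ω * (W a i ω * W b i ω)) := by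
    intro i ω
    have : ∑ a, ∑ b, c ^ 2 * (d a ω * d b ω * (W a i ω * W b i ω))
        = c ^ 2 * ((∑ a, W a i ω * d a ω) * (∑ a, W a i ω * d a ω)) := by
      rw [Finset.sum_mul_sum, Finset.mul_sum]
      refine Finset.sum_congr rfl fun a _ => ?_
      rw [Finset.mul_sum]
      refine Finset.sum_congr rfl fun b _ => ?_
      ring
    rw [this]
    have : ∑ a, (2 * c) * (d i ω * d a ω * W a i ω) = 2 * c * d i ω * ∑ a, W a i ω * d a ω := by
      rw [Finset.mul_sum]
      refine Finset.sum_congr rfl fun b _ => ?_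
      ring
    rw [this]; ring
  have I1 : ∀ i, Integrable (fun ω => ∑ a, (2 * c) * (d i ω * d a ω * W a i ω)) μ := fun i =>
    integrable_finsetSum _ fun a _ => (i1 i a a i).const_mul _
  have I2 : ∀ i, Integrable
      (fun ω => ∑ a, ∑ b, c ^ 2 * (d a ω * d b ω * (W a i ω * W b i ω))) μ := fun i =>
    integrable_finsetSum _ fun a _ => integrable_finsetSum _ fun b _ => (i2 a b a b i).const_mul _
  have I0 : ∀ i, Integrable
      (fun ω => d i ω * d i ω + ∑ a, (2 * c) * (d i ω * d a ω * W a i ω)) μ := fun i =>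
    (hdd i i).add (I1 i)
  have I3 : ∀ i, Integrable (fun ω => (d i ω + c * ∑ a, W a i ω * d a ω) ^ 2) μ := fun i => by
    simp_rw [hsq]
    exact ((hdd i i).add (I1 i)).add (I2 i)
  refine ⟨fun i => (memLp_two_iff_integrable_sq ?_).2 (I3 i), ?_⟩
  · refine (hd i).1.add (AEStronglyMeasurable.const_mul ?_ c)
    exact Finset.aestronglyMeasurable_fun_sum _ fun a _ => (hW a i).1.mul (hd a).1
  rw [integral_finsetSum _ fun i _ => I3 i,
    integral_finsetSum _ fun i _ => (hd i).integrable_sq]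
  have key : ∀ i, ∫ ω, (d i ω + c * ∑ a, W a i ω * d a ω) ^ 2 ∂μ
      = ∫ ω, d i ω ^ 2 ∂μ + c ^ 2 * ((n : ℝ)⁻¹ * ∑ a, ∫ ω, d a ω ^ 2 ∂μ) := by
    intro i
    simp_rw [hsq]
    rw [integral_add (I0 i) (I2 i), integral_add (hdd i i) (I1 i),
      integral_finsetSum _ fun a _ => (i1 i a a i).const_mul _,
      integral_finsetSum _ fun a _ =>
        integrable_finsetSum _ fun b _ => (i2 a b a b i).const_mul _]
    have : ∀ a, ∫ ω, ∑ b, c ^ 2 * (d a ω * d b ω * (W a i ω * W b i ω)) ∂μ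
        = c ^ 2 * ((n : ℝ)⁻¹ * ∫ ω, d a ω ^ 2 ∂μ) := by
      intro a
      rw [integral_finsetSum _ fun b _ => (i2 a b a b i).const_mul _]
      simp_rw [integral_const_mul, v2]
      simp only [mul_ite, mul_zero, Finset.sum_ite_eq, Finset.mem_univ, if_true, pow_two]
      ring
    simp_rw [this, integral_const_mul, v1]
    simp [Finset.mul_sum, pow_two]
  simp_rw [key]
  rw [Finset.sum_add_distrib]
  simp only [Finset.sum_const, Finset.card_univ, Fintype.card_fin, nsmul_eq_mul]
  have : (n : ℝ) ≠ 0 := by positivity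
  field_simp

lemma resD_measurable (n : ℕ) (α : ℝ) (v : Fin n → ℝ) (L j : ℕ) :
    Measurable (fun ω => resD n α v L ω j) := by
  induction j with
  | zero => simp only [resD]; exact measurable_const
  | succ j ih =>
    simp only [resD]
    split_ifs with h
    · refine ih.add ?_
      rw [measurable_pi_iff] at ih ⊢
      intro i
      simp only [Pi.smul_apply, smul_eq_mul, Matrix.mulVec, dotProduct, Matrix.transpose_apply,
        Matrix.of_apply]
      refine Measurable.const_mul ?_ _
      refine Finset.measurable_sum _ fun a _ => Measurable.mul (by fun_prop) (ih a)
    · simpa using ih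

lemma resD_congr (n : ℕ) (α : ℝ) (v : Fin n → ℝ) (L : ℕ) (ω ω' : Fin L → Fin n → Fin n → ℝ)
    (j : ℕ) (h : ∀ k : Fin L, L - j ≤ k.1 → ω k = ω' k) :
    resD n α v L ω j = resD n α v L ω' j := by
  induction j with
  | zero => rfl
  | succ j ih =>
    have := ih fun k hk => h k (by omega)
    simp only [resD]
    rw [this]
    split_ifs with hj
    · rw [h ⟨L - 1 - j, by omega⟩ (by simp; omega)]
    · rfl

lemma resD_indep (n : ℕ) (α : ℝ) (v : Fin n → ℝ) (L j : ℕ) (hj : j < L) :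
    IndepFun (fun ω => resD n α v L ω j) (fun ω => ω ⟨L - 1 - j, by omega⟩) (gaussMats n L) := by
  classical
  set k : Fin L := ⟨L - 1 - j, by omega⟩ with hk
  have h := iIndepFun_pi (ι := Fin L) (Ω := fun _ => Fin n → Fin n → ℝ)
    (μ := fun _ : Fin L => Measure.pi fun _ : Fin n => Measure.pi fun _ : Fin n =>
      gaussianReal 0 (n : ℝ≥0)⁻¹) (X := fun _ => id) (fun _ => aemeasurable_id)
  have h2 := h.indepFun_finset (Finset.univ \ {k}) {k} Finset.sdiff_disjoint
    (fun i => by simp only [id]; fun_prop)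
  let ext : ((Finset.univ \ {k} : Finset (Fin L)) → Fin n → Fin n → ℝ) →
      (Fin L → Fin n → Fin n → ℝ) :=
    fun r i => if h : i ∈ (Finset.univ \ {k} : Finset (Fin L)) then r ⟨i, h⟩ else 0
  have hext : Measurable ext := by
    refine measurable_pi_iff.2 fun i => ?_
    by_cases h : i ∈ (Finset.univ \ {k} : Finset (Fin L))
    · simp only [ext, h, dif_pos]; fun_prop
    · simp only [ext, h, dif_neg, not_false_eq_true]; exact measurable_const
  have hψ : Measurable (fun r : (({k} : Finset (Fin L)) → Fin n → Fin n → ℝ) =>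
      r ⟨k, by simp⟩) := measurable_pi_apply _
  have h3 := h2.comp (φ := fun r => resD n α v L (ext r) j)
    ((resD_measurable n α v L j).comp hext) hψ
  convert h3 using 1
  · ext1 ω
    apply resD_congr
    intro i hi
    have : i ≠ k := by
      intro hik
      rw [hik, hk] at hi
      simp only at hi
      omega
    simp [ext, this]
  · rfl
  · rfl

lemma entry_mp (n L : ℕ) (k : Fin L) (a i : Fin n) :
    MeasurePreserving (fun ω : Fin L → Fin n → Fin n → ℝ => ω k a i) (gaussMats n L)
      (gaussianReal 0 (n : ℝ≥0)⁻¹) := by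
  have h1 := measurePreserving_eval (fun _ : Fin n => gaussianReal 0 (n : ℝ≥0)⁻¹) i
  have h2 := measurePreserving_eval (fun _ : Fin n => Measure.pi fun _ : Fin n =>
    gaussianReal 0 (n : ℝ≥0)⁻¹) a
  have h3 := measurePreserving_eval (fun _ : Fin L => Measure.pi fun _ : Fin n =>
    Measure.pi fun _ : Fin n => gaussianReal 0 (n : ℝ≥0)⁻¹) k
  exact h1.comp (h2.comp h3)

lemma entry_memLp (n L : ℕ) (k : Fin L) (a i : Fin n) :
    MemLp (fun ω : Fin L → Fin n → Fin n → ℝ => ω k a i) 2 (gaussMats n L) :=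
  (memLp_id_gaussianReal' 2 (by norm_num)).comp_measurePreserving (entry_mp n L k a i)

lemma entry_mean (n L : ℕ) (k : Fin L) (a i : Fin n) :
    ∫ ω, ω k a i ∂(gaussMats n L) = 0 := by
  have h := entry_mp n L k a i
  have := integral_map (μ := gaussMats n L) h.measurable.aemeasurable
    (f := fun x : ℝ => x) (by fun_prop)
  rw [← this, h.map_eq, integral_id_gaussianReal]

lemma entry_cov (n L : ℕ) (k : Fin L) (a b i : Fin n) :
    ∫ ω, ω k a i * ω k b i ∂(gaussMats n L) = if a = b then (n : ℝ)⁻¹ else 0 := by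
  split_ifs with hab
  · subst hab
    have h := entry_mp n L k a i
    have := integral_map (μ := gaussMats n L) h.measurable.aemeasurable
      (f := fun x : ℝ => x * x) (by fun_prop)
    rw [← this, h.map_eq]
    have hv := variance_id_gaussianReal (μ := 0) (v := (n : ℝ≥0)⁻¹)
    rw [variance_of_integral_eq_zero (by fun_prop) (by simp)] at hv
    simpa [pow_two] using hv
  · have h0 := iIndepFun_pi (ι := Fin n) (Ω := fun _ => Fin n → ℝ)
      (μ := fun _ : Fin n => Measure.pi fun _ : Fin n =>
        gaussianReal 0 (n : ℝ≥0)⁻¹) (X := fun _ x => x i)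
      (fun _ => (measurable_pi_apply i).aemeasurable)
    have h1 := h0.indepFun hab
    have h3 := measurePreserving_eval (fun _ : Fin L => Measure.pi fun _ : Fin n =>
      Measure.pi fun _ : Fin n => gaussianReal 0 (n : ℝ≥0)⁻¹) k
    have hm : ∀ a, Measurable (fun x : Fin n → Fin n → ℝ => x a i) := fun a => by fun_prop
    have e1 := integral_map (μ := gaussMats n L) h3.measurable.aemeasurable
      (f := fun x : Fin n → Fin n → ℝ => x a i * x b i) ((hm a).mul (hm b)).aestronglyMeasurable
    have e2 := integral_map (μ := gaussMats n L) h3.measurable.aemeasurable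
      (f := fun x : Fin n → Fin n → ℝ => x a i) (hm a).aestronglyMeasurable
    simp only [Function.eval] at e1 e2
    rw [entry_mean] at e2
    rw [← e1]
    unfold gaussMats at e2 ⊢
    have h4 := h3.map_eq
    rw [h4] at e2 ⊢
    rw [h1.integral_fun_mul_eq_mul_integral (hm a).aestronglyMeasurable
      (hm b).aestronglyMeasurable, e2, zero_mul]

lemma resD_main (n : ℕ) (hn : 1 ≤ n) (α : ℝ) (v : Fin n → ℝ) (L j : ℕ) (hj : j ≤ L) :
    (∀ i, MemLp (fun ω => resD n α v L ω j i) 2 (gaussMats n L)) ∧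
    ∫ ω, (∑ i, (resD n α v L ω j i) ^ 2) ∂(gaussMats n L) =
      (1 + (L : ℝ) ^ (-(2 * α))) ^ j * ∑ i, (v i) ^ 2 := by
  induction j with
  | zero =>
    simp only [resD]
    exact ⟨fun i => memLp_const _, by simp⟩
  | succ j ih =>
    obtain ⟨ih1, ih2⟩ := ih (by omega)
    have hjL : j < L := by omega
    have hs := step_aux (gaussMats n L) n hn ((L : ℝ) ^ (-α)) (fun a ω => resD n α v L ω j a)
      (fun a i ω => ω ⟨L - 1 - j, by omega⟩ a i) ih1 (fun a i => entry_memLp n L _ a i)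
      (resD_indep n α v L j hjL) (fun a i => entry_mean n L _ a i)
      (fun a b i => entry_cov n L _ a b i)
    have hr : ∀ ω i, resD n α v L ω (j + 1) i = resD n α v L ω j i + (L : ℝ) ^ (-α) *
        ∑ a, ω ⟨L - 1 - j, by omega⟩ a i * resD n α v L ω j a := by
      intro ω i
      simp [resD, hjL, Matrix.mulVec, dotProduct]
    simp_rw [hr]
    refine ⟨hs.1, hs.2.trans ?_⟩
    rw [ih2]
    have : ((L : ℝ) ^ (-α)) ^ 2 = (L : ℝ) ^ (-(2 * α)) := by
      rw [← Real.rpow_natCast, ← Real.rpow_mul (by positivity)]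
      congr 1; push_cast; ring
    rw [this]; ring

/-- For the backward pass `d^{l−1} = d^l + L^{−α}(W^l)ᵀ d^l`, `d^L = v`, at
initialization: `E‖d^l‖² = (1 + L^{−2α})^{L−l}·‖v‖²` for `0 ≤ l ≤ L`, and the supremum
over depths `L` of `E‖d^0‖²` is finite iff `α ≥ 1/2`. -/
theorem stmt_6 (n : ℕ) (hn : 1 ≤ n) (α : ℝ) (v : Fin n → ℝ) (hv : v ≠ 0) :
    (∀ L : ℕ, 1 ≤ L → ∀ l : ℕ, l ≤ L →
      (∫ ω, (∑ i, (resD n α v L ω (L - l) i) ^ 2) ∂(gaussMats n L)) =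
        (1 + (L : ℝ) ^ (-(2 * α))) ^ (L - l) * ∑ i, (v i) ^ 2) ∧
    ((∃ M : ℝ, ∀ L : ℕ, 1 ≤ L →
        (∫ ω, (∑ i, (resD n α v L ω L i) ^ 2) ∂(gaussMats n L)) ≤ M) ↔ 1 / 2 ≤ α) := by
  have main : ∀ L j : ℕ, j ≤ L → _ := fun L j hj => (resD_main n hn α v L j hj).2
  refine ⟨fun L _ l _ => main L (L - l) (by omega), ?_⟩
  have hS : 0 < ∑ i, (v i) ^ 2 := by
    obtain ⟨i, hi⟩ := Function.ne_iff.1 hv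
    exact Finset.sum_pos' (fun i _ => sq_nonneg _) ⟨i, Finset.mem_univ _, by
      have : v i ≠ 0 := hi
      positivity⟩
  constructor
  · rintro ⟨M, hM⟩
    by_contra! hα
    have ht : Filter.Tendsto (fun L : ℕ => (L : ℝ) ^ (1 - 2 * α)) Filter.atTop Filter.atTop :=
      (tendsto_rpow_atTop (by linarith)).comp tendsto_natCast_atTop_atTop
    obtain ⟨L, hL, hL1⟩ := ((ht.eventually_gt_atTop (M / ∑ i, (v i) ^ 2)).and
      (Filter.eventually_ge_atTop 1)).exists
    have h := hM L hL1
    rw [main L L le_rfl] at h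
    have hLpos : (0 : ℝ) < L := by exact_mod_cast hL1
    have hx : 0 ≤ (L : ℝ) ^ (-(2 * α)) := by positivity
    have hb := one_add_mul_le_pow (a := (L : ℝ) ^ (-(2 * α))) (by linarith) L
    have he : (L : ℝ) * (L : ℝ) ^ (-(2 * α)) = (L : ℝ) ^ (1 - 2 * α) := by
      rw [sub_eq_add_neg, Real.rpow_add hLpos, Real.rpow_one]
    rw [he] at hb
    rw [div_lt_iff₀ hS] at hL
    have := mul_le_mul_of_nonneg_right hb hS.le
    nlinarith
  · intro hα
    refine ⟨Real.exp 1 * ∑ i, (v i) ^ 2, fun L hL1 => ?_⟩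
    rw [main L L le_rfl]
    refine mul_le_mul_of_nonneg_right ?_ hS.le
    have hLpos : (0 : ℝ) < L := by exact_mod_cast hL1
    have h1 : (L : ℝ) ^ (-(2 * α)) ≤ (L : ℝ)⁻¹ := by
      rw [← Real.rpow_neg_one]
      exact Real.rpow_le_rpow_of_exponent_le (by exact_mod_cast hL1) (by linarith)
    have hx : 0 ≤ (L : ℝ) ^ (-(2 * α)) := by positivity
    calc (1 + (L : ℝ) ^ (-(2 * α))) ^ L ≤ (Real.exp ((L : ℝ)⁻¹)) ^ L := by
          refine pow_le_pow_left₀ (by positivity) ?_ L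
          have := Real.add_one_le_exp ((L : ℝ)⁻¹)
          linarith
      _ = Real.exp 1 := by
          rw [← Real.exp_nat_mul, mul_inv_cancel₀ hLpos.ne']
end

section
/- With Γ^L and C^L as defined in the context, for every t ∈ {0, …, T−1}, every s ∈ {−1, …, t−1}, every a, b ∈ {0,1}, every p ∈ [0,1] (p ∈ (0,1] for C), and every q ∈ (0,1], the sequences (Γ^{2^k}_{t,s,a,b}(p,q))_{k∈ℕ} and (C^{2^k}_{t,s,a}(p))_{k∈ℕ} are Cauchy sequences of real numbers (hence convergent as k → ∞). -/
open MeasureTheory Set Finset Filter Topology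

/-- The defining recursion (from the Tensor-Program analysis of a depth-`L` linear residual
network `x^l = x^{l−1} + L^{−1/2} W^l x^{l−1}` trained for `T` SGD steps under Depth-μP)
for the coefficient functions `Γ^L_{t,r,a,b}(p,q)` and covariance functions `C^L_{t,s,a}(p)`,
together with the output values `f̊_t` and loss derivatives `χ̊_t = ℓ'_t(f̊_t)`.

Conventions: Booleans encode the indices `a, b ∈ {0,1}` (`false = 0`, `true = 1`); the
time index `r, s = −1` refers to the input/output layers `U, V`; `C_{−1,−1,·} ≡ 1`;
`C_{t,s,·} ≡ 0` if exactly one of `t, s` is `−1`; `C` is symmetric; `Γ_{s,r,·,·} ≡ 0` for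
`r > s`; `Γ^L` is constant in `p` on each interval `((l−1)/L, l/L]`. -/
structure IsLinearTP (T L : ℕ) (ξ : ℕ → ℝ) (ℓ' : ℕ → ℝ → ℝ)
    (Γ : ℕ → ℤ → Bool → Bool → ℝ → ℝ → ℝ)
    (C : ℤ → ℤ → Bool → ℝ → ℝ)
    (f χ : ℕ → ℝ) : Prop where
  C_symm : ∀ (t s : ℤ) (b : Bool) (p : ℝ), C t s b p = C s t b p
  C_base : ∀ (b : Bool) (p : ℝ), C (-1) (-1) b p = 1
  C_mixed : ∀ t : ℤ, 0 ≤ t → ∀ (b : Bool) (p : ℝ), C t (-1) b p = 0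
  Γ_vanish : ∀ (t : ℕ) (r : ℤ), (t : ℤ) < r → ∀ (a b : Bool) (p q : ℝ), Γ t r a b p q = 0
  Γ_const : ∀ t : ℕ, t < T → ∀ r : ℤ, -1 ≤ r → r ≤ (t : ℤ) → ∀ a b : Bool,
    ∀ l : ℕ, 1 ≤ l → l ≤ L → ∀ p q : ℝ, ((l : ℝ) - 1) / L < p → p ≤ (l : ℝ) / L →
      0 < q → q ≤ 1 → Γ t r a b p q = Γ t r a b ((l : ℝ) / L) q
  fwd_init : ∀ t : ℕ, t < T → ∀ r : ℤ, -1 ≤ r → r ≤ (t : ℤ) → ∀ b : Bool,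
    ∀ q : ℝ, 0 < q → q ≤ 1 →
      Γ t r false b 0 q = if r = -1 ∧ b = false then ξ t else 0
  fwd_step : ∀ t : ℕ, t < T → ∀ l : ℕ, 1 ≤ l → l ≤ L → ∀ r : ℤ, -1 ≤ r → r ≤ (t : ℤ) →
    ∀ b : Bool, ∀ p q : ℝ, ((l : ℝ) - 1) / L < p → p ≤ (l : ℝ) / L → 0 < q → q ≤ 1 →
      Γ t r false b p q =
        Γ t r false b (((l : ℝ) - 1) / L) q
          + (if (t : ℤ) = r ∧ b = false ∧ (l : ℤ) = ⌈(L : ℝ) * q⌉ then 1 else 0)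
          + (1 / (L : ℝ)) * ∑ s ∈ Finset.range t,
              Γ s r true b ((l : ℝ) / L) q *
                (Γ t (s : ℤ) false true (((l : ℝ) - 1) / L) ((l : ℝ) / L)
                  - C (t : ℤ) (s : ℤ) false ((l : ℝ) / L))
  fwd_C : ∀ t : ℕ, t < T → ∀ s : ℕ, s ≤ t → ∀ l : ℕ, 1 ≤ l → l ≤ L →
    ∀ p : ℝ, ((l : ℝ) - 1) / L < p → p ≤ (l : ℝ) / L →
      C (t : ℤ) (s : ℤ) false p =
        ∑ t' ∈ Finset.Icc (-1 : ℤ) (t : ℤ), ∑ s' ∈ Finset.Icc (-1 : ℤ) (s : ℤ), ∑ b : Bool,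
          ∫ q in Ioc (0 : ℝ) 1,
            Γ t t' false b (((l : ℝ) - 1) / L) q * C t' s' b q *
              Γ s s' false b (((l : ℝ) - 1) / L) q
  f_def : ∀ t : ℕ, t < T → f t = Γ t (-1) false true 1 1
  χ_def : ∀ t : ℕ, t < T → χ t = ℓ' t (f t)
  bwd_init : ∀ t : ℕ, t < T → ∀ r : ℤ, -1 ≤ r → r ≤ (t : ℤ) → ∀ b : Bool,
    ∀ q : ℝ, 0 < q → q ≤ 1 →
      Γ t r true b 1 q = if r = -1 ∧ b = true then χ t else 0
  bwd_step : ∀ t : ℕ, t < T → ∀ l : ℕ, 1 ≤ l → l ≤ L → ∀ r : ℤ, -1 ≤ r → r ≤ (t : ℤ) →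
    ∀ b : Bool, ∀ p q : ℝ, ((l : ℝ) - 2) / L < p → p ≤ ((l : ℝ) - 1) / L → 0 ≤ p →
      0 < q → q ≤ 1 →
      Γ t r true b p q =
        Γ t r true b ((l : ℝ) / L) q
          + (if (t : ℤ) = r ∧ b = true ∧ (l : ℤ) = ⌈(L : ℝ) * q⌉ then 1 else 0)
          + (1 / (L : ℝ)) * ∑ s ∈ Finset.range t,
              Γ s r false b (((l : ℝ) - 1) / L) q *
                (Γ t (s : ℤ) true false ((l : ℝ) / L) ((l : ℝ) / L)
                  - C (t : ℤ) (s : ℤ) true ((l : ℝ) / L))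
  bwd_C : ∀ t : ℕ, t < T → ∀ s : ℕ, s ≤ t → ∀ l : ℕ, 1 ≤ l → l ≤ L →
    ∀ p : ℝ, ((l : ℝ) - 1) / L < p → p ≤ (l : ℝ) / L →
      C (t : ℤ) (s : ℤ) true p =
        ∑ t' ∈ Finset.Icc (-1 : ℤ) (t : ℤ), ∑ s' ∈ Finset.Icc (-1 : ℤ) (s : ℤ), ∑ b : Bool,
          ∫ q in Ioc (0 : ℝ) 1,
            Γ t t' true b ((l : ℝ) / L) q * C t' s' b q * Γ s s' true b ((l : ℝ) / L) q


namespace LinTP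

/-- Discrete Gronwall lemma for the coupled system. -/
theorem gronwall {ι : Type*} (I : Finset ι) (m n : ℕ) (hmn : m ≤ n) (N : ℕ) (hN : 1 ≤ N)
    (κ ε : ℝ) (hκ : 0 ≤ κ) (hε : 0 ≤ ε)
    (β : ℕ → ι) (hβ : ∀ s < m, β s ∈ I)
    (d : ι → ℕ → ℕ → ℝ) (e : ℕ → ℕ → ℝ)
    (h : ι → ℕ → ℕ → ℕ → ℝ) (A : ℕ → ι → ℕ → ℕ → ℝ) (B : ℕ → ℕ → ℕ → ℕ → ℝ)
    (u : ι → ℕ → ℕ → ℝ) (v : ℕ → ℕ → ℝ)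
    (hh : ∀ α ∈ I, ∀ s < m, ∀ i < N, ∀ j < N, |h α s i j| ≤ κ)
    (hA : ∀ s < n, ∀ α ∈ I, ∀ i < N, ∀ j < N, |A s α i j| ≤ κ)
    (hB : ∀ s < n, ∀ s' < n, ∀ i < N, ∀ j < i, |B s s' i j| ≤ κ)
    (hu : ∀ α ∈ I, ∀ j < N, (1 / (N : ℝ)) * ∑ i ∈ Finset.range N, |u α i j| ≤ ε)
    (hv : ∀ s < n, ∀ i < N, |v s i| ≤ ε)
    (h0 : ∀ α ∈ I, ∀ j < N, |d α 0 j| ≤ ε)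
    (hd : ∀ α ∈ I, ∀ i < N, ∀ j < N, d α (i + 1) j = d α i j
      + (1 / (N : ℝ)) * (∑ s ∈ Finset.range m, h α s i j * (d (β s) i i - e s i) + u α i j))
    (he : ∀ s < n, ∀ i < N, e s i =
      (1 / (N : ℝ)) * ∑ j ∈ Finset.range N, ∑ α ∈ I, A s α i j * d α i j
      + (1 / (N : ℝ)) * ∑ j ∈ Finset.range i, ∑ s' ∈ Finset.range n, B s s' i j * e s' j
      + v s i) :
    ∀ (P : ℝ), P = κ * (I.card + n) + 1 →
    (∀ α ∈ I, ∀ i ≤ N, ∀ j < N, |d α i j| ≤ 2 * Real.exp (6 * P ^ 2) * ε) ∧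
    (∀ s < n, ∀ i < N, |e s i| ≤ 4 * P * Real.exp (6 * P ^ 2) * ε) := by
  intro P hP
  have hP1 : 1 ≤ P := by
    rw [hP]; have : 0 ≤ κ * (I.card + n) := by positivity
    linarith
  have hNpos : (0 : ℝ) < N := by exact_mod_cast hN
  have hIP : (I.card : ℝ) * κ ≤ P := by
    rw [hP]; nlinarith [mul_nonneg hκ (Nat.cast_nonneg (α := ℝ) n)]
  have hnP : (n : ℝ) * κ ≤ P := by
    rw [hP]; nlinarith [mul_nonneg hκ (Nat.cast_nonneg (α := ℝ) I.card)]
  have hmP : (m : ℝ) * κ ≤ P := by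
    refine le_trans ?_ hnP
    gcongr
  set K : ℝ := 6 * P ^ 2 with hK
  have hKpos : 0 < K := by positivity
  set S : ℕ → ℝ := fun i => ε * (1 + K / N) ^ i with hS
  have hS1 : ∀ i, S (i + 1) = S i + (1 / (N : ℝ)) * (K * S i) := by
    intro i; simp only [hS, pow_succ]; field_simp
  have hS0 : S 0 = ε := by simp [hS]
  have hSε : ∀ i, ε ≤ S i := by
    intro i
    have : (1 : ℝ) ≤ (1 + K / N) ^ i := one_le_pow₀ (by
      have : 0 ≤ K / N := by positivity
      linarith)
    simp only [hS]; nlinarith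
  have hSnn : ∀ i, 0 ≤ S i := fun i => hε.trans (hSε i)
  have hSsum : ∀ i, (1 / (N : ℝ)) * ∑ j ∈ Finset.range i, K * S j = S i - ε := by
    intro i
    induction i with
    | zero => simp [hS0]
    | succ i ih => rw [Finset.sum_range_succ, mul_add, ih, hS1]; ring
  have hSexp : ∀ i ≤ N, S i ≤ Real.exp K * ε := by
    intro i hi
    have h1 : (1 + K / N) ^ i ≤ Real.exp K := by
      calc (1 + K / N) ^ i ≤ (1 + K / N) ^ N :=
            pow_le_pow_right₀ (by have : 0 ≤ K / N := by positivity
                                  linarith) hi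
        _ ≤ (Real.exp (K / N)) ^ N := by
            gcongr
            linarith [Real.add_one_le_exp (K / N)]
        _ = Real.exp K := by
            rw [← Real.exp_nat_mul]; congr 1; field_simp
    simp only [hS]; nlinarith
  -- main induction
  have key : ∀ i, i ≤ N → (∀ i' ≤ i, ∀ α ∈ I, ∀ j < N, |d α i' j| ≤ S i'
        + (1 / (N : ℝ)) * ∑ l ∈ Finset.range i', |u α l j|) ∧
      (∀ i' < i, ∀ s < n, |e s i'| ≤ 4 * P * S i') := by
    intro i
    induction i with
    | zero =>
      intro _
      refine ⟨?_, by intro i' hi'; omega⟩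
      intro i' hi' α hα j hj
      obtain rfl : i' = 0 := by omega
      simpa [hS0] using h0 α hα j hj
    | succ i ih =>
      intro hi
      obtain ⟨ih1, ih2⟩ := ih (by omega)
      have hiN : i < N := by omega
      have hd2 : ∀ α ∈ I, ∀ j < N, |d α i j| ≤ 2 * S i := by
        intro α hα j hj
        have h1 := ih1 i le_rfl α hα j hj
        have h2 : (1 / (N : ℝ)) * ∑ l ∈ Finset.range i, |u α l j| ≤ ε := by
          refine le_trans ?_ (hu α hα j hj)
          gcongr
        linarith [hSε i]
      have hei : ∀ s < n, |e s i| ≤ 4 * P * S i := by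
        intro s hs
        have t1 : |(1 / (N : ℝ)) * ∑ j ∈ Finset.range N, ∑ α ∈ I, A s α i j * d α i j|
            ≤ 2 * P * S i := by
          rw [abs_mul, abs_of_nonneg (by positivity : (0:ℝ) ≤ 1 / N)]
          have : |∑ j ∈ Finset.range N, ∑ α ∈ I, A s α i j * d α i j|
              ≤ ∑ j ∈ Finset.range N, ∑ α ∈ I, κ * (2 * S i) := by
            refine (Finset.abs_sum_le_sum_abs _ _).trans (Finset.sum_le_sum fun j hj => ?_)
            refine (Finset.abs_sum_le_sum_abs _ _).trans (Finset.sum_le_sum fun α hα => ?_)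
            rw [abs_mul]
            have hj' := Finset.mem_range.1 hj
            exact mul_le_mul (hA s hs α hα i hiN j hj') (hd2 α hα j hj') (abs_nonneg _) hκ
          simp only [Finset.sum_const, Finset.card_range, nsmul_eq_mul] at this
          calc (1 / (N : ℝ)) * _ ≤ (1 / (N : ℝ)) * (N * (I.card * (κ * (2 * S i)))) := by gcongr
            _ = (I.card * κ) * (2 * S i) := by field_simp
            _ ≤ P * (2 * S i) := by have := hSnn i; gcongr
            _ = 2 * P * S i := by ring
        have t2 : |(1 / (N : ℝ)) * ∑ j ∈ Finset.range i, ∑ s' ∈ Finset.range n,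
            B s s' i j * e s' j| ≤ P * S i := by
          rw [abs_mul, abs_of_nonneg (by positivity : (0:ℝ) ≤ 1 / N)]
          have : |∑ j ∈ Finset.range i, ∑ s' ∈ Finset.range n, B s s' i j * e s' j|
              ≤ ∑ j ∈ Finset.range i, K * S j := by
            refine (Finset.abs_sum_le_sum_abs _ _).trans (Finset.sum_le_sum fun j hj => ?_)
            have hj' := Finset.mem_range.1 hj
            have h3 : |∑ s' ∈ Finset.range n, B s s' i j * e s' j|
                ≤ ∑ s' ∈ Finset.range n, κ * (4 * P * S j) := by
              refine (Finset.abs_sum_le_sum_abs _ _).trans (Finset.sum_le_sum fun s' hs' => ?_)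
              rw [abs_mul]
              have hs'' := Finset.mem_range.1 hs'
              exact mul_le_mul (hB s hs s' hs'' i hiN j hj') (ih2 j hj' s' hs'') (abs_nonneg _) hκ
            refine h3.trans ?_
            simp only [Finset.sum_const, Finset.card_range, nsmul_eq_mul]
            have hSj := hSnn j
            calc n * (κ * (4 * P * S j)) = (n * κ) * (4 * P * S j) := by ring
              _ ≤ P * (4 * P * S j) := by gcongr
              _ ≤ K * S j := by rw [hK]; nlinarith [mul_nonneg (sq_nonneg P) hSj]
          calc (1 / (N : ℝ)) * _ ≤ (1 / (N : ℝ)) * ∑ j ∈ Finset.range i, K * S j := by gcongr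
            _ = S i - ε := hSsum i
            _ ≤ P * S i := by nlinarith [hSnn i]
        have t3 := hv s hs i hiN
        rw [he s hs i hiN]
        refine (abs_add_le _ _).trans ?_
        have := abs_add_le ((1 / (N : ℝ)) * ∑ j ∈ Finset.range N, ∑ α ∈ I, A s α i j * d α i j)
          ((1 / (N : ℝ)) * ∑ j ∈ Finset.range i, ∑ s' ∈ Finset.range n, B s s' i j * e s' j)
        nlinarith [hSε i, hSnn i]
      refine ⟨?_, ?_⟩
      · intro i' hi' α hα j hj
        rcases Nat.lt_or_ge i' (i + 1) with h' | h'
        · exact ih1 i' (by omega) α hα j hj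
        obtain rfl : i' = i + 1 := by omega
        rw [hd α hα i hiN j hj, hS1, Finset.sum_range_succ]
        have h1 := ih1 i le_rfl α hα j hj
        have h3 : |∑ s ∈ Finset.range m, h α s i j * (d (β s) i i - e s i)| ≤ K * S i := by
          have : |∑ s ∈ Finset.range m, h α s i j * (d (β s) i i - e s i)|
              ≤ ∑ s ∈ Finset.range m, κ * (2 * S i + 4 * P * S i) := by
            refine (Finset.abs_sum_le_sum_abs _ _).trans (Finset.sum_le_sum fun s hs => ?_)
            have hs' := Finset.mem_range.1 hs
            rw [abs_mul]
            refine mul_le_mul (hh α hα s hs' i hiN j hj) ?_ (abs_nonneg _) hκ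
            refine (abs_sub _ _).trans ?_
            exact add_le_add (hd2 _ (hβ s hs') i hiN) (hei s (by omega))
          refine this.trans ?_
          simp only [Finset.sum_const, Finset.card_range, nsmul_eq_mul]
          have hSi := hSnn i
          calc m * (κ * (2 * S i + 4 * P * S i)) = (m * κ) * (2 * S i + 4 * P * S i) := by ring
            _ ≤ P * (2 * S i + 4 * P * S i) := by gcongr
            _ ≤ K * S i := by
              rw [hK]
              nlinarith [mul_nonneg (mul_nonneg (by linarith : 0 ≤ P) (by linarith : 0 ≤ P - 1)) hSi]
        have h4 := abs_add_le (∑ s ∈ Finset.range m, h α s i j * (d (β s) i i - e s i)) (u α i j)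
        have h5 : |(1 / (N : ℝ)) * (∑ s ∈ Finset.range m, h α s i j * (d (β s) i i - e s i)
            + u α i j)| ≤ (1 / (N : ℝ)) * (K * S i + |u α i j|) := by
          rw [abs_mul, abs_of_nonneg (by positivity : (0:ℝ) ≤ 1 / N)]
          gcongr
          linarith
        refine (abs_add_le _ _).trans ?_
        rw [mul_add] at h5
        rw [mul_add]
        linarith
      · intro i' hi' s hs
        rcases Nat.lt_or_ge i' i with h' | h'
        · exact ih2 i' h' s hs
        · obtain rfl : i' = i := by omega
          exact hei s hs
  obtain ⟨k1, k2⟩ := key N le_rfl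
  refine ⟨?_, ?_⟩
  · intro α hα i hi j hj
    have h1 := k1 i hi α hα j hj
    have h2 : (1 / (N : ℝ)) * ∑ l ∈ Finset.range i, |u α l j| ≤ ε := by
      refine le_trans ?_ (hu α hα j hj)
      gcongr
    linarith [hSε i, hSexp i hi]
  · intro s hs i hi
    have h1 := k2 i hi s hs
    have := hSexp i hi.le
    calc |e s i| ≤ 4 * P * S i := h1
      _ ≤ 4 * P * (Real.exp K * ε) := by gcongr
      _ = _ := by ring

end LinTP


namespace LinTP

/-- Indicator of a band around the diagonal. -/
def nr (i j : ℕ) : ℝ := if j ≤ i + 3 ∧ i ≤ j + 4 then 1 else 0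

theorem nr_nonneg (i j : ℕ) : 0 ≤ nr i j := by unfold nr; split_ifs <;> norm_num

theorem sum_nr_right (N i : ℕ) : ∑ j ∈ Finset.range N, nr i j ≤ 8 := by
  unfold nr
  rw [← Finset.sum_filter, Finset.sum_const, nsmul_eq_mul, mul_one]
  have : (Finset.filter (fun j => j ≤ i + 3 ∧ i ≤ j + 4) (Finset.range N))
      ⊆ Finset.Icc (i - 4) (i + 3) := by
    intro j hj
    simp only [Finset.mem_filter, Finset.mem_Icc] at hj ⊢
    omega
  have h := Finset.card_le_card this
  rw [Nat.card_Icc] at h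
  have : (Finset.filter (fun j => j ≤ i + 3 ∧ i ≤ j + 4) (Finset.range N)).card ≤ 8 := by omega
  exact_mod_cast this

theorem sum_nr_left (N j : ℕ) : ∑ i ∈ Finset.range N, nr (i + 1) j ≤ 8 := by
  unfold nr
  rw [← Finset.sum_filter, Finset.sum_const, nsmul_eq_mul, mul_one]
  have : (Finset.filter (fun i => j ≤ i + 1 + 3 ∧ i + 1 ≤ j + 4) (Finset.range N))
      ⊆ Finset.Icc (j - 4) (j + 3) := by
    intro j hj
    simp only [Finset.mem_filter, Finset.mem_Icc] at hj ⊢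
    omega
  have h := Finset.card_le_card this
  rw [Nat.card_Icc] at h
  have : (Finset.filter (fun i => j ≤ i + 1 + 3 ∧ i + 1 ≤ j + 4) (Finset.range N)).card ≤ 8 := by
    omega
  exact_mod_cast this

theorem mean_nr_right (L i : ℕ) (hL : 1 ≤ L) :
    (1 / ((2 * L : ℕ) : ℝ)) * ∑ j ∈ Finset.range (2 * L), (1 / (L : ℝ) + nr i j) ≤ 5 / L := by
  have hLp : (0 : ℝ) < L := by exact_mod_cast hL
  rw [Finset.sum_add_distrib, Finset.sum_const, Finset.card_range, nsmul_eq_mul]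
  have h := sum_nr_right (2 * L) i
  calc _ ≤ (1 / ((2 * L : ℕ) : ℝ)) * (((2 * L : ℕ) : ℝ) * (1 / L) + 8) := by gcongr
    _ = 5 / L := by push_cast; field_simp; norm_num

theorem mean_nr_left (L j : ℕ) (hL : 1 ≤ L) :
    (1 / ((2 * L : ℕ) : ℝ)) * ∑ i ∈ Finset.range (2 * L), (1 / (L : ℝ) + nr (i + 1) j) ≤ 5 / L := by
  have hLp : (0 : ℝ) < L := by exact_mod_cast hL
  rw [Finset.sum_add_distrib, Finset.sum_const, Finset.card_range, nsmul_eq_mul]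
  have h := sum_nr_left (2 * L) j
  calc _ ≤ (1 / ((2 * L : ℕ) : ℝ)) * (((2 * L : ℕ) : ℝ) * (1 / L) + 8) := by gcongr
    _ = 5 / L := by push_cast; field_simp; norm_num

theorem sum_half (k : ℕ) (f : ℕ → ℝ) :
    ∑ j ∈ Finset.range (2 * k), f (j / 2) = 2 * ∑ j ∈ Finset.range k, f j := by
  induction k with
  | zero => simp
  | succ k ih =>
    rw [show 2 * (k + 1) = 2 * k + 1 + 1 by ring, Finset.sum_range_succ, Finset.sum_range_succ,
      ih, Finset.sum_range_succ, show 2 * k / 2 = k by omega, show (2 * k + 1) / 2 = k by omega]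
    ring

/-- Weak closeness of the depth `L` and depth `2L` members of a family. -/
def GoodM (M : ℝ) (F : ℕ → ℕ → ℕ → ℝ) : Prop :=
  0 ≤ M ∧ ∀ L : ℕ, 1 ≤ L → (∀ i ≤ L, ∀ j < L, |F L i j| ≤ M) ∧
    ∀ i i' j, i ≤ L → i' ≤ 2 * L → j < 2 * L → 2 * i ≤ i' + 1 → i' ≤ 2 * i + 1 →
      |F L i (j / 2) - F (2 * L) i' j| ≤ M * (1 / L + nr i' j)

/-- Strong closeness of the depth `L` and depth `2L` members of a family. -/
def SGoodM (M : ℝ) (F : ℕ → ℕ → ℕ → ℝ) : Prop :=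
  0 ≤ M ∧ ∀ L : ℕ, 1 ≤ L → (∀ i ≤ L, ∀ j < L, |F L i j| ≤ M) ∧
    ∀ i i' j, i ≤ L → i' ≤ 2 * L → j < 2 * L → 2 * i ≤ i' + 1 → i' ≤ 2 * i + 1 →
      |F L i (j / 2) - F (2 * L) i' j| ≤ M * (1 / L)

/-- Same for families of real numbers. -/
def NGoodM (M : ℝ) (z : ℕ → ℝ) : Prop :=
  0 ≤ M ∧ ∀ L : ℕ, 1 ≤ L → |z L| ≤ M ∧ |z L - z (2 * L)| ≤ M * (1 / L)

theorem GoodM.mono {M M' : ℝ} {F} (h : GoodM M F) (hM : M ≤ M') : GoodM M' F := by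
  refine ⟨h.1.trans hM, fun L hL => ⟨fun i hi j hj => ((h.2 L hL).1 i hi j hj).trans hM, ?_⟩⟩
  intro i i' j h1 h2 h3 h4 h5
  refine ((h.2 L hL).2 i i' j h1 h2 h3 h4 h5).trans ?_
  have := nr_nonneg i' j
  gcongr

theorem NGoodM.mono {M M' : ℝ} {z} (h : NGoodM M z) (hM : M ≤ M') : NGoodM M' z := by
  refine ⟨h.1.trans hM, fun L hL => ⟨((h.2 L hL).1).trans hM, ?_⟩⟩
  refine ((h.2 L hL).2).trans ?_
  gcongr

theorem exists_unif {κ : Type*} (S : Finset κ) (P : κ → ℝ → Prop)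
    (hmono : ∀ k M M', M ≤ M' → P k M → P k M') (h : ∀ k ∈ S, ∃ M, P k M) :
    ∃ M, 0 ≤ M ∧ ∀ k ∈ S, P k M := by
  classical
  induction S using Finset.induction_on with
  | empty => exact ⟨0, le_rfl, by simp⟩
  | insert a S ha ih =>
    obtain ⟨M1, h01, h1⟩ := ih fun k hk => h k (Finset.mem_insert_of_mem hk)
    obtain ⟨M2, h2⟩ := h a (Finset.mem_insert_self _ _)
    refine ⟨max M1 M2, le_max_of_le_left h01, fun k hk => ?_⟩
    rcases Finset.mem_insert.1 hk with rfl | hk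
    · exact hmono _ _ _ (le_max_right _ _) h2
    · exact hmono _ _ _ (le_max_left _ _) (h1 k hk)

theorem abs_prod_diff {a b a' b' M X E D : ℝ} (h1 : |a - a'| ≤ E) (h2 : |b| ≤ X)
    (h3 : |a'| ≤ M) (h4 : |b - b'| ≤ D) : |a * b - a' * b'| ≤ E * X + M * D := by
  have : a * b - a' * b' = (a - a') * b + a' * (b - b') := by ring
  rw [this]
  refine (abs_add_le _ _).trans ?_
  rw [abs_mul, abs_mul]
  have := abs_nonneg (a - a')
  have := abs_nonneg a'
  have := abs_nonneg b
  have := abs_nonneg (b - b')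
  gcongr <;> linarith

set_option maxHeartbeats 4000000 in
/-- The generic comparison theorem for one sweep. -/
theorem generic {ι : Type*} (I : Finset ι) (m n : ℕ) (hmn : m ≤ n)
    (β : ℕ → ι) (hβ : ∀ s < m, β s ∈ I)
    (x : ι → ℕ → ℕ → ℕ → ℝ) (c : ℕ → ℕ → ℕ → ℝ) (z : ι → ℕ → ℝ)
    (H : ι → ℕ → ℕ → ℕ → ℕ → ℝ) (A : ℕ → ι → ℕ → ℕ → ℕ → ℝ) (B : ℕ → ℕ → ℕ → ℕ → ℕ → ℝ)
    (hH : ∀ α ∈ I, ∀ s < m, ∃ M, GoodM M (H α s))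
    (hA : ∀ s < n, ∀ α ∈ I, ∃ M, GoodM M (A s α))
    (hB : ∀ s < n, ∀ s' < n, ∃ M, GoodM M (B s s'))
    (hz : ∀ α ∈ I, ∃ M, NGoodM M (z α))
    (h0 : ∀ L, 1 ≤ L → ∀ α ∈ I, ∀ j < L, x α L 0 j = z α L)
    (hx : ∀ L, 1 ≤ L → ∀ α ∈ I, ∀ i < L, ∀ j < L, x α L (i + 1) j = x α L i j
      + (1 / (L : ℝ)) * (∑ s ∈ Finset.range m,
          H α s L (i + 1) j * (x (β s) L i i - c s L i)))
    (hc : ∀ L, 1 ≤ L → ∀ s < n, ∀ i < L, c s L i =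
      (1 / (L : ℝ)) * ∑ j ∈ Finset.range L, ∑ α ∈ I, A s α L i j * x α L i j
      + (1 / (L : ℝ)) * ∑ j ∈ Finset.range i, ∑ s' ∈ Finset.range n, B s s' L i j * c s' L j) :
    (∀ α ∈ I, ∃ M, SGoodM M (x α)) ∧ (∀ s < n, ∃ M, SGoodM M (fun L _ j => c s L j)) := by
  classical
  obtain ⟨M, hM0, hHM, hAM, hBM, hzM⟩ : ∃ M : ℝ, 0 ≤ M ∧
      (∀ α ∈ I, ∀ s < m, GoodM M (H α s)) ∧ (∀ s < n, ∀ α ∈ I, GoodM M (A s α)) ∧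
      (∀ s < n, ∀ s' < n, GoodM M (B s s')) ∧ (∀ α ∈ I, NGoodM M (z α)) := by
    obtain ⟨M1, p1, q1⟩ := exists_unif (I ×ˢ Finset.range m) (fun k M => GoodM M (H k.1 k.2))
      (fun k M M' hM h => h.mono hM) (by
        intro k hk; rw [Finset.mem_product, Finset.mem_range] at hk; exact hH _ hk.1 _ hk.2)
    obtain ⟨M2, p2, q2⟩ := exists_unif (Finset.range n ×ˢ I) (fun k M => GoodM M (A k.1 k.2))
      (fun k M M' hM h => h.mono hM) (by
        intro k hk; rw [Finset.mem_product, Finset.mem_range] at hk; exact hA _ hk.1 _ hk.2)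
    obtain ⟨M3, p3, q3⟩ := exists_unif (Finset.range n ×ˢ Finset.range n)
      (fun k M => GoodM M (B k.1 k.2))
      (fun k M M' hM h => h.mono hM) (by
        intro k hk; rw [Finset.mem_product, Finset.mem_range, Finset.mem_range] at hk
        exact hB _ hk.1 _ hk.2)
    obtain ⟨M4, p4, q4⟩ := exists_unif I (fun k M => NGoodM M (z k))
      (fun k M M' hM h => h.mono hM) hz
    refine ⟨M1 + M2 + M3 + M4, by positivity, ?_, ?_, ?_, ?_⟩
    · intro α hα s hs
      exact (q1 (α, s) (Finset.mem_product.2 ⟨hα, Finset.mem_range.2 hs⟩)).mono (by linarith)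
    · intro s hs α hα
      exact (q2 (s, α) (Finset.mem_product.2 ⟨Finset.mem_range.2 hs, hα⟩)).mono (by linarith)
    · intro s hs s' hs'
      exact (q3 (s, s') (Finset.mem_product.2
        ⟨Finset.mem_range.2 hs, Finset.mem_range.2 hs'⟩)).mono (by linarith)
    · intro α hα
      exact (q4 α hα).mono (by linarith)
  -- a priori bounds
  obtain ⟨P, hP⟩ : ∃ P : ℝ, P = M * (I.card + n) + 1 := ⟨_, rfl⟩
  have hP1 : 1 ≤ P := by
    rw [hP]; have : 0 ≤ M * (I.card + n) := by positivity
    linarith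
  obtain ⟨G, hG⟩ : ∃ G : ℝ, G = 4 * P * Real.exp (6 * P ^ 2) := ⟨_, rfl⟩
  have hG2 : 2 * Real.exp (6 * P ^ 2) ≤ G := by
    rw [hG]; nlinarith [Real.exp_pos (6 * P ^ 2)]
  have hG0 : 0 ≤ G := by rw [hG]; positivity
  obtain ⟨X, hX⟩ : ∃ X : ℝ, X = G * M := ⟨_, rfl⟩
  have hX0 : 0 ≤ X := by rw [hX]; positivity
  have bd : ∀ L, 1 ≤ L → (∀ α ∈ I, ∀ i ≤ L, ∀ j < L, |x α L i j| ≤ X) ∧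
      (∀ s < n, ∀ i < L, |c s L i| ≤ X) := by
    intro L hL
    have := gronwall I m n hmn L hL M M hM0 hM0 β hβ (fun α => x α L) (fun s => c s L)
      (fun α s i j => H α s L (i + 1) j) (fun s α => A s α L) (fun s s' => B s s' L)
      (fun _ _ _ => 0) (fun _ _ => 0)
      (fun α hα s hs i hi j hj => ((hHM α hα s hs).2 L hL).1 (i + 1) hi j hj)
      (fun s hs α hα i hi j hj => ((hAM s hs α hα).2 L hL).1 i hi.le j hj)
      (fun s hs s' hs' i hi j hj => ((hBM s hs s' hs').2 L hL).1 i hi.le j (hj.trans hi))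
      (by intro α hα j hj; simpa using hM0) (by intro s hs i hi; simpa using hM0)
      (by intro α hα j hj; rw [h0 L hL α hα j hj]; exact ((hzM α hα).2 L hL).1)
      (by intro α hα i hi j hj; simpa using hx L hL α hα i hi j hj)
      (by intro s hs i hi; simpa using hc L hL s hs i hi) P hP
    refine ⟨fun α hα i hi j hj => (this.1 α hα i hi j hj).trans ?_,
      fun s hs i hi => (this.2 s hs i hi).trans ?_⟩
    · rw [hX]; gcongr
    · rw [hX, hG]
  -- Lipschitz in the row index
  obtain ⟨Λ, hΛ⟩ : ∃ Λ : ℝ, Λ = m * (M * (2 * X)) := ⟨_, rfl⟩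
  have hΛ0 : 0 ≤ Λ := by rw [hΛ]; positivity
  have lip1 : ∀ L, 1 ≤ L → ∀ α ∈ I, ∀ i < L, ∀ j < L,
      |x α L (i + 1) j - x α L i j| ≤ Λ * (1 / L) := by
    intro L hL α hα i hi j hj
    rw [hx L hL α hα i hi j hj, add_sub_cancel_left, abs_mul,
      abs_of_nonneg (by positivity : (0:ℝ) ≤ 1 / L), mul_comm]
    gcongr
    refine (Finset.abs_sum_le_sum_abs _ _).trans ?_
    refine (Finset.sum_le_card_nsmul _ _ (M * (2 * X)) ?_).trans ?_
    · intro s hs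
      have hs' := Finset.mem_range.1 hs
      rw [abs_mul]
      refine mul_le_mul (((hHM α hα s hs').2 L hL).1 (i + 1) hi j hj) ?_ (abs_nonneg _) hM0
      have h1 := (bd L hL).1 (β s) (hβ s hs') i hi.le i hi
      have h2 := (bd L hL).2 s (by omega) i hi
      refine (abs_sub _ _).trans ?_
      linarith
    · rw [hΛ, Finset.card_range, nsmul_eq_mul]
  have lip : ∀ L, 1 ≤ L → ∀ α ∈ I, ∀ i k j, i ≤ L → k ≤ L → j < L → i ≤ k + 1 → k ≤ i + 1 →
      |x α L i j - x α L k j| ≤ Λ * (1 / L) := by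
    intro L hL α hα i k j hi hk hj h1 h2
    have hp : 0 ≤ Λ * (1 / (L : ℝ)) := by positivity
    rcases (by omega : i = k + 1 ∨ i = k ∨ k = i + 1) with rfl | rfl | rfl
    · exact lip1 L hL α hα k (by omega) j hj
    · simpa using hp
    · rw [abs_sub_comm]; exact lip1 L hL α hα i (by omega) j hj
  obtain ⟨W, hW⟩ : ∃ W : ℝ, W = 2 * M * X + M * Λ := ⟨_, rfl⟩
  have hW0 : 0 ≤ W := by rw [hW]; positivity
  obtain ⟨Q, hQ⟩ : ∃ Q : ℝ, Q = (5 * I.card + 6 * n + 5 * m) * W + M := ⟨_, rfl⟩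
  have hQ0 : 0 ≤ Q := by rw [hQ]; positivity
  let y : ι → ℕ → ℕ → ℕ → ℝ := fun α L i j =>
    (x α L (i / 2) (j / 2) + x α L ((i + 1) / 2) (j / 2)) / 2
  have hyx : ∀ L, 1 ≤ L → ∀ α ∈ I, ∀ i i' j, i ≤ L → i' ≤ 2 * L → j < 2 * L →
      2 * i ≤ i' + 1 → i' ≤ 2 * i + 1 → |x α L i (j / 2) - y α L i' j| ≤ Λ * (1 / L) := by
    intro L hL α hα i i' j hi hi' hj h1 h2
    have e1 := lip L hL α hα i (i' / 2) (j / 2) hi (by omega) (by omega) (by omega) (by omega)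
    have e2 := lip L hL α hα i ((i' + 1) / 2) (j / 2) hi (by omega) (by omega) (by omega)
      (by omega)
    rw [abs_le] at e1 e2 ⊢
    simp only [y]
    constructor <;> linarith [e1.1, e1.2, e2.1, e2.2]
  have diff : ∀ L, 1 ≤ L →
      (∀ α ∈ I, ∀ i ≤ 2 * L, ∀ j < 2 * L, |y α L i j - x α (2 * L) i j| ≤ G * Q * (1 / L)) ∧
      (∀ s < n, ∀ i < 2 * L, |c s L (i / 2) - c s (2 * L) i| ≤ G * Q * (1 / L)) := by
    intro L hL
    have hL2 : 1 ≤ 2 * L := by omega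
    have hLp : (0 : ℝ) < L := by exact_mod_cast hL
    have hL2p : (0 : ℝ) < ((2 * L : ℕ) : ℝ) := by exact_mod_cast hL2
    have hhalf : (1 / (L : ℝ)) = (1 / ((2 * L : ℕ) : ℝ)) * 2 := by push_cast; field_simp
    let u : ι → ℕ → ℕ → ℝ := fun α i j => ∑ s ∈ Finset.range m,
      (H α s L (i / 2 + 1) (j / 2) * (x (β s) L (i / 2) (i / 2) - c s L (i / 2))
        - H α s (2 * L) (i + 1) j * (y (β s) L i i - c s L (i / 2)))
    let v : ℕ → ℕ → ℝ := fun s i =>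
      (1 / ((2 * L : ℕ) : ℝ)) * ∑ j ∈ Finset.range (2 * L), ∑ α ∈ I,
        (A s α L (i / 2) (j / 2) * x α L (i / 2) (j / 2) - A s α (2 * L) i j * y α L i j)
      + (1 / ((2 * L : ℕ) : ℝ)) * (∑ j ∈ Finset.range (2 * (i / 2)), ∑ s' ∈ Finset.range n,
          B s s' L (i / 2) (j / 2) * c s' L (j / 2)
        - ∑ j ∈ Finset.range i, ∑ s' ∈ Finset.range n, B s s' (2 * L) i j * c s' L (j / 2))
    have hε0 : 0 ≤ Q * (1 / (L : ℝ)) := by positivity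
    have := gronwall I m n hmn (2 * L) hL2 M (Q * (1 / L)) hM0 hε0 β hβ
      (fun α i j => y α L i j - x α (2 * L) i j) (fun s i => c s L (i / 2) - c s (2 * L) i)
      (fun α s i j => H α s (2 * L) (i + 1) j) (fun s α => A s α (2 * L))
      (fun s s' => B s s' (2 * L)) u v
      (fun α hα s hs i hi j hj => ((hHM α hα s hs).2 (2 * L) hL2).1 (i + 1) hi j hj)
      (fun s hs α hα i hi j hj => ((hAM s hs α hα).2 (2 * L) hL2).1 i hi.le j hj)
      (fun s hs s' hs' i hi j hj => ((hBM s hs s' hs').2 (2 * L) hL2).1 i hi.le j (hj.trans hi))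
      ?_ ?_ ?_ ?_ ?_ P hP
    · refine ⟨fun α hα i hi j hj => (this.1 α hα i hi j hj).trans ?_,
        fun s hs i hi => (this.2 s hs i hi).trans ?_⟩
      · rw [mul_assoc G]; gcongr
      · rw [mul_assoc G, hG]
    · -- bound on u
      intro α hα j hj
      have hub : ∀ i ∈ Finset.range (2 * L), |u α i j| ≤ (m * W) * (1 / L + nr (i + 1) j) := by
        intro i hi
        have hi := Finset.mem_range.1 hi
        refine (Finset.abs_sum_le_sum_abs _ _).trans ?_
        refine (Finset.sum_le_card_nsmul _ _ (W * (1 / L + nr (i + 1) j)) ?_).trans ?_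
        · intro s hs
          have hs' := Finset.mem_range.1 hs
          have e1 := ((hHM α hα s hs').2 L hL).2 (i / 2 + 1) (i + 1) j (by omega) (by omega) hj
            (by omega) (by omega)
          have e2 : |x (β s) L (i / 2) (i / 2) - c s L (i / 2)| ≤ 2 * X := by
            have h1 := (bd L hL).1 (β s) (hβ s hs') (i / 2) (by omega) (i / 2) (by omega)
            have h2 := (bd L hL).2 s (by omega) (i / 2) (by omega)
            refine (abs_sub _ _).trans ?_
            linarith
          have e3 := ((hHM α hα s hs').2 (2 * L) hL2).1 (i + 1) hi j hj
          have e4 : |(x (β s) L (i / 2) (i / 2) - c s L (i / 2)) - (y (β s) L i i - c s L (i / 2))|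
              ≤ Λ * (1 / L) := by
            rw [sub_sub_sub_cancel_right]
            exact hyx L hL (β s) (hβ s hs') (i / 2) i i (by omega) (by omega) hi (by omega)
              (by omega)
          refine (abs_prod_diff e1 e2 e3 e4).trans ?_
          have hn := nr_nonneg (i + 1) j
          rw [hW]
          nlinarith [mul_nonneg (mul_nonneg hM0 hΛ0) hn]
        · rw [Finset.card_range, nsmul_eq_mul, mul_assoc]
      calc _ ≤ (1 / ((2 * L : ℕ) : ℝ)) * ∑ i ∈ Finset.range (2 * L),
            (m * W) * (1 / L + nr (i + 1) j) := by
              gcongr with i hi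
              exact hub i hi
        _ = (m * W) * ((1 / ((2 * L : ℕ) : ℝ)) * ∑ i ∈ Finset.range (2 * L),
            (1 / L + nr (i + 1) j)) := by rw [← Finset.mul_sum]; ring
        _ ≤ (m * W) * (5 / L) := by
              have := mean_nr_left L j hL
              gcongr
        _ = (5 * m * W) * (1 / L) := by ring
        _ ≤ Q * (1 / L) := by
              gcongr
              rw [hQ]
              have : 0 ≤ (5 * (I.card : ℝ) + 6 * n) * W := by positivity
              linarith
    · -- bound on v
      intro s hs i hi
      have hv1 : |(1 / ((2 * L : ℕ) : ℝ)) * ∑ j ∈ Finset.range (2 * L), ∑ α ∈ I,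
          (A s α L (i / 2) (j / 2) * x α L (i / 2) (j / 2) - A s α (2 * L) i j * y α L i j)|
          ≤ (I.card * W) * (5 / L) := by
        rw [abs_mul, abs_of_nonneg (by positivity : (0:ℝ) ≤ 1 / ((2 * L : ℕ) : ℝ))]
        have hb : ∀ j ∈ Finset.range (2 * L), |∑ α ∈ I,
          (A s α L (i / 2) (j / 2) * x α L (i / 2) (j / 2) - A s α (2 * L) i j * y α L i j)|
            ≤ (I.card * W) * (1 / L + nr i j) := by
          intro j hj
          have hj := Finset.mem_range.1 hj
          refine (Finset.abs_sum_le_sum_abs _ _).trans ?_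
          refine (Finset.sum_le_card_nsmul _ _ (W * (1 / L + nr i j)) ?_).trans ?_
          · intro α hα
            have e1 := ((hAM s hs α hα).2 L hL).2 (i / 2) i j (by omega) (by omega) hj
              (by omega) (by omega)
            have e2 := (bd L hL).1 α hα (i / 2) (by omega) (j / 2) (by omega)
            have e3 := ((hAM s hs α hα).2 (2 * L) hL2).1 i hi.le j hj
            have e4 := hyx L hL α hα (i / 2) i j (by omega) (by omega) hj (by omega) (by omega)
            refine (abs_prod_diff e1 e2 e3 e4).trans ?_
            have hn := nr_nonneg i j
            have hl : 0 ≤ 1 / (L : ℝ) := by positivity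
            rw [hW]
            nlinarith [mul_nonneg (mul_nonneg hM0 hΛ0) hn, mul_nonneg (mul_nonneg hM0 hX0) hn,
              mul_nonneg (mul_nonneg hM0 hX0) hl]
          · rw [nsmul_eq_mul, mul_assoc]
        calc _ ≤ (1 / ((2 * L : ℕ) : ℝ)) * ∑ j ∈ Finset.range (2 * L),
              (I.card * W) * (1 / L + nr i j) := by
                gcongr
                exact (Finset.abs_sum_le_sum_abs _ _).trans (Finset.sum_le_sum hb)
          _ = (I.card * W) * ((1 / ((2 * L : ℕ) : ℝ)) * ∑ j ∈ Finset.range (2 * L),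
              (1 / L + nr i j)) := by rw [← Finset.mul_sum]; ring
          _ ≤ (I.card * W) * (5 / L) := by
                have := mean_nr_right L i hL
                gcongr
      have hv2 : |∑ j ∈ Finset.range (2 * (i / 2)), ∑ s' ∈ Finset.range n,
          B s s' L (i / 2) (j / 2) * c s' L (j / 2)
        - ∑ j ∈ Finset.range i, ∑ s' ∈ Finset.range n,
          B s s' L (i / 2) (j / 2) * c s' L (j / 2)| ≤ n * W := by
        rcases (by omega : i = 2 * (i / 2) ∨ i = 2 * (i / 2) + 1) with h | h
        · rw [← h]; simp only [sub_self, abs_zero]; positivity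
        · conv_lhs => enter [1, 2, 1]; rw [h]
          rw [Finset.sum_range_succ, sub_add_cancel_left, abs_neg]
          refine (Finset.abs_sum_le_sum_abs _ _).trans ?_
          refine (Finset.sum_le_card_nsmul _ _ W ?_).trans ?_
          · intro s' hs'
            have hs' := Finset.mem_range.1 hs'
            rw [abs_mul]
            have e1 := ((hBM s hs s' hs').2 L hL).1 (i / 2) (by omega) (2 * (i / 2) / 2) (by omega)
            have e2 := (bd L hL).2 s' hs' (2 * (i / 2) / 2) (by omega)
            have := mul_le_mul e1 e2 (abs_nonneg _) hM0
            rw [hW]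
            nlinarith [mul_nonneg hM0 hX0, mul_nonneg hM0 hΛ0]
          · rw [Finset.card_range, nsmul_eq_mul]
      have hv3 : (1 / ((2 * L : ℕ) : ℝ)) * |∑ j ∈ Finset.range i, ∑ s' ∈ Finset.range n,
          B s s' L (i / 2) (j / 2) * c s' L (j / 2) - ∑ j ∈ Finset.range i, ∑ s' ∈ Finset.range n,
          B s s' (2 * L) i j * c s' L (j / 2)| ≤ (n * W) * (5 / L) := by
        rw [← Finset.sum_sub_distrib]
        have hb : ∀ j ∈ Finset.range i, |∑ s' ∈ Finset.range n,
          B s s' L (i / 2) (j / 2) * c s' L (j / 2) - ∑ s' ∈ Finset.range n,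
          B s s' (2 * L) i j * c s' L (j / 2)| ≤ (n * W) * (1 / L + nr i j) := by
          intro j hj
          have hj := Finset.mem_range.1 hj
          rw [← Finset.sum_sub_distrib]
          refine (Finset.abs_sum_le_sum_abs _ _).trans ?_
          refine (Finset.sum_le_card_nsmul _ _ (W * (1 / L + nr i j)) ?_).trans ?_
          · intro s' hs'
            have hs' := Finset.mem_range.1 hs'
            have e1 := ((hBM s hs s' hs').2 L hL).2 (i / 2) i j (by omega) (by omega) (by omega)
              (by omega) (by omega)
            have e2 := (bd L hL).2 s' hs' (j / 2) (by omega)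
            rw [← sub_mul, abs_mul]
            have hn := nr_nonneg i j
            have hl : 0 ≤ 1 / (L : ℝ) := by positivity
            have e3 := mul_le_mul e1 e2 (abs_nonneg _) (by positivity)
            refine e3.trans ?_
            rw [hW]
            nlinarith [mul_nonneg (mul_nonneg hM0 hΛ0) hn, mul_nonneg (mul_nonneg hM0 hX0) hn,
              mul_nonneg (mul_nonneg hM0 hX0) hl, mul_nonneg (mul_nonneg hM0 hΛ0) hl]
          · rw [Finset.card_range, nsmul_eq_mul, mul_assoc]
        calc _ ≤ (1 / ((2 * L : ℕ) : ℝ)) * ∑ j ∈ Finset.range (2 * L),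
              (n * W) * (1 / L + nr i j) := by
                gcongr
                refine (Finset.abs_sum_le_sum_abs _ _).trans ((Finset.sum_le_sum hb).trans ?_)
                refine Finset.sum_le_sum_of_subset_of_nonneg
                  (Finset.range_subset_range.2 hi.le) fun j _ _ => ?_
                have := nr_nonneg i j
                positivity
          _ = (n * W) * ((1 / ((2 * L : ℕ) : ℝ)) * ∑ j ∈ Finset.range (2 * L),
              (1 / L + nr i j)) := by rw [← Finset.mul_sum]; ring
          _ ≤ (n * W) * (5 / L) := by
                have := mean_nr_right L i hL
                gcongr
      refine (abs_add_le _ _).trans ?_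
      have hv4 : |(1 / ((2 * L : ℕ) : ℝ)) * (∑ j ∈ Finset.range (2 * (i / 2)),
          ∑ s' ∈ Finset.range n, B s s' L (i / 2) (j / 2) * c s' L (j / 2)
        - ∑ j ∈ Finset.range i, ∑ s' ∈ Finset.range n, B s s' (2 * L) i j * c s' L (j / 2))|
          ≤ n * W * (1 / L) + (n * W) * (5 / L) := by
        rw [abs_mul, abs_of_nonneg (by positivity : (0:ℝ) ≤ 1 / ((2 * L : ℕ) : ℝ))]
        refine le_trans (mul_le_mul_of_nonneg_left (abs_sub_le _ (∑ j ∈ Finset.range i,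
          ∑ s' ∈ Finset.range n, B s s' L (i / 2) (j / 2) * c s' L (j / 2)) _)
          (by positivity)) ?_
        rw [mul_add]
        refine add_le_add ?_ hv3
        rw [mul_comm]
        have : (1 / ((2 * L : ℕ) : ℝ)) ≤ 1 / L := by
          rw [hhalf]
          have : (0:ℝ) ≤ (1 / ((2 * L : ℕ) : ℝ)) := by positivity
          linarith
        gcongr
      have : Q * (1 / (L:ℝ)) = (I.card * W) * (5 / L) + (n * W * (1 / L) + (n * W) * (5 / L))
          + (5 * m * W + M) * (1 / L) := by rw [hQ]; ring
      have h5 : 0 ≤ (5 * m * W + M) * (1 / (L:ℝ)) := by positivity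
      linarith
    · -- initial condition
      intro α hα j hj
      have : y α L 0 j - x α (2 * L) 0 j = z α L - z α (2 * L) := by
        simp only [y]
        rw [h0 (2 * L) hL2 α hα j hj, show (0 + 1) / 2 = 0 from rfl,
          h0 L hL α hα (j / 2) (by omega)]
        ring
      rw [this]
      refine ((hzM α hα).2 L hL).2.trans ?_
      gcongr
      rw [hQ]
      have : 0 ≤ (5 * (I.card : ℝ) + 6 * n + 5 * m) * W := by positivity
      linarith
    · -- step
      intro α hα i hi j hj
      have e1 := hx (2 * L) hL2 α hα i hi j hj
      have e2 := hx L hL α hα (i / 2) (by omega) (j / 2) (by omega)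
      have e3 : y α L (i + 1) j - y α L i j = (1 / ((2 * L : ℕ) : ℝ)) * ∑ s ∈ Finset.range m,
          H α s L (i / 2 + 1) (j / 2) * (x (β s) L (i / 2) (i / 2) - c s L (i / 2)) := by
        simp only [y]
        rw [show (i + 1 + 1) / 2 = i / 2 + 1 by omega, e2, hhalf]
        ring
      have e4 : ∑ s ∈ Finset.range m, H α s (2 * L) (i + 1) j *
            ((y (β s) L i i - x (β s) (2 * L) i i) - (c s L (i / 2) - c s (2 * L) i)) + u α i j
          = ∑ s ∈ Finset.range m,
              H α s L (i / 2 + 1) (j / 2) * (x (β s) L (i / 2) (i / 2) - c s L (i / 2))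
            - ∑ s ∈ Finset.range m,
              H α s (2 * L) (i + 1) j * (x (β s) (2 * L) i i - c s (2 * L) i) := by
        simp only [u]
        rw [← Finset.sum_add_distrib, ← Finset.sum_sub_distrib]
        refine Finset.sum_congr rfl fun s _ => ?_
        ring
      rw [e4, e1, mul_sub, ← e3]
      ring
    · -- covariance
      intro s hs i hi
      have e1 := hc (2 * L) hL2 s hs i hi
      have e2 := hc L hL s hs (i / 2) (by omega)
      have s1 := sum_half L (fun j => ∑ α ∈ I, A s α L (i / 2) j * x α L (i / 2) j)
      have s2 := sum_half (i / 2) (fun j => ∑ s' ∈ Finset.range n,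
        B s s' L (i / 2) j * c s' L j)
      have e3 : c s L (i / 2) = (1 / ((2 * L : ℕ) : ℝ)) * ∑ j ∈ Finset.range (2 * L),
          ∑ α ∈ I, A s α L (i / 2) (j / 2) * x α L (i / 2) (j / 2)
          + (1 / ((2 * L : ℕ) : ℝ)) * ∑ j ∈ Finset.range (2 * (i / 2)), ∑ s' ∈ Finset.range n,
            B s s' L (i / 2) (j / 2) * c s' L (j / 2) := by
        rw [s1, s2, e2, hhalf]; ring
      rw [e3, e1]
      simp only [v, mul_sub, Finset.sum_sub_distrib]
      ring
  refine ⟨fun α hα => ⟨X + (Λ + G * Q), by positivity, fun L hL => ⟨fun i hi j hj => ?_, ?_⟩⟩,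
    fun s hs => ⟨X + G * Q, by positivity, fun L hL => ⟨fun i hi j hj => ?_, ?_⟩⟩⟩
  · have := (bd L hL).1 α hα i hi j hj
    have : 0 ≤ Λ + G * Q := by positivity
    linarith
  · intro i i' j hi hi' hj h1 h2
    have e1 := hyx L hL α hα i i' j hi hi' hj h1 h2
    have e2 := (diff L hL).1 α hα i' hi' j hj
    refine (abs_sub_le _ (y α L i' j) _).trans ?_
    have : 0 ≤ X * (1 / (L:ℝ)) := by positivity
    linarith
  · have := (bd L hL).2 s hs j hj
    have : 0 ≤ G * Q := by positivity
    linarith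
  · intro i i' j hi hi' hj h1 h2
    have e2 := (diff L hL).2 s hs j hj
    have : 0 ≤ X * (1 / (L:ℝ)) := by positivity
    simp only
    linarith

end LinTP


namespace LinTP

def Good (F : ℕ → ℕ → ℕ → ℝ) : Prop := ∃ M, GoodM M F
def SGood (F : ℕ → ℕ → ℕ → ℝ) : Prop := ∃ M, SGoodM M F
def NGood (z : ℕ → ℝ) : Prop := ∃ M, NGoodM M z

theorem SGood.good {F} (h : SGood F) : Good F := by
  obtain ⟨M, h0, h⟩ := h
  refine ⟨M, h0, fun L hL => ⟨(h L hL).1, fun i i' j h1 h2 h3 h4 h5 => ?_⟩⟩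
  refine ((h L hL).2 i i' j h1 h2 h3 h4 h5).trans ?_
  have := nr_nonneg i' j
  gcongr
  linarith

theorem Good.congr {F F'} (h : Good F) (e : ∀ L, 1 ≤ L → ∀ i ≤ L, ∀ j < L, F' L i j = F L i j) :
    Good F' := by
  obtain ⟨M, h0, h⟩ := h
  refine ⟨M, h0, fun L hL => ⟨fun i hi j hj => ?_, fun i i' j h1 h2 h3 h4 h5 => ?_⟩⟩
  · rw [e L hL i hi j hj]; exact (h L hL).1 i hi j hj
  · rw [e L hL i h1 (j / 2) (by omega), e (2 * L) (by omega) i' h2 j h3]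
    exact (h L hL).2 i i' j h1 h2 h3 h4 h5

theorem SGood.congr {F F'} (h : SGood F)
    (e : ∀ L, 1 ≤ L → ∀ i ≤ L, ∀ j < L, F' L i j = F L i j) : SGood F' := by
  obtain ⟨M, h0, h⟩ := h
  refine ⟨M, h0, fun L hL => ⟨fun i hi j hj => ?_, fun i i' j h1 h2 h3 h4 h5 => ?_⟩⟩
  · rw [e L hL i hi j hj]; exact (h L hL).1 i hi j hj
  · rw [e L hL i h1 (j / 2) (by omega), e (2 * L) (by omega) i' h2 j h3]
    exact (h L hL).2 i i' j h1 h2 h3 h4 h5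

theorem SGood.const (k : ℝ) : SGood (fun _ _ _ => k) := by
  refine ⟨|k|, abs_nonneg _, fun L hL => ⟨fun i hi j hj => le_rfl, fun i i' j _ _ _ _ _ => ?_⟩⟩
  rw [sub_self, abs_zero]; positivity

theorem Good.mul {F F'} (h : Good F) (h' : Good F') : Good (fun L i j => F L i j * F' L i j) := by
  obtain ⟨M, h0, h⟩ := h
  obtain ⟨M', h0', h'⟩ := h'
  refine ⟨2 * (M * M'), by positivity,
    fun L hL => ⟨fun i hi j hj => ?_, fun i i' j h1 h2 h3 h4 h5 => ?_⟩⟩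
  · rw [abs_mul]
    have := mul_le_mul ((h L hL).1 i hi j hj) ((h' L hL).1 i hi j hj) (abs_nonneg _) h0
    nlinarith [mul_nonneg h0 h0']
  · refine (abs_prod_diff ((h L hL).2 i i' j h1 h2 h3 h4 h5) ((h' L hL).1 i h1 (j / 2) (by omega))
      ((h (2 * L) (by omega)).1 i' h2 j h3) ((h' L hL).2 i i' j h1 h2 h3 h4 h5)).trans ?_
    apply le_of_eq; ring

theorem Good.add {F F'} (h : Good F) (h' : Good F') : Good (fun L i j => F L i j + F' L i j) := by
  obtain ⟨M, h0, h⟩ := h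
  obtain ⟨M', h0', h'⟩ := h'
  refine ⟨M + M', by positivity,
    fun L hL => ⟨fun i hi j hj => ?_, fun i i' j h1 h2 h3 h4 h5 => ?_⟩⟩
  · exact (abs_add_le _ _).trans (add_le_add ((h L hL).1 i hi j hj) ((h' L hL).1 i hi j hj))
  · rw [add_sub_add_comm, add_mul]
    exact (abs_add_le _ _).trans (add_le_add ((h L hL).2 i i' j h1 h2 h3 h4 h5)
      ((h' L hL).2 i i' j h1 h2 h3 h4 h5))

theorem Good.sum {κ : Type*} (S : Finset κ) (F : κ → ℕ → ℕ → ℕ → ℝ) (h : ∀ k ∈ S, Good (F k)) :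
    Good (fun L i j => ∑ k ∈ S, F k L i j) := by
  classical
  induction S using Finset.induction_on with
  | empty => simpa using (SGood.const 0).good
  | insert a S ha ih =>
    simp only [Finset.sum_insert ha]
    exact (h a (Finset.mem_insert_self _ _)).add
      (ih fun k hk => h k (Finset.mem_insert_of_mem hk))

theorem nr_refl {L i j : ℕ} (hi : i ≤ L) (hj : j < L) : nr (L - i) (L - 1 - j) = nr i j := by
  unfold nr
  congr 1
  apply propext
  omega

theorem Good.refl {F} (h : Good F) : Good (fun L i j => F L (L - i) (L - 1 - j)) := by
  obtain ⟨M, h0, h⟩ := h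
  refine ⟨M, h0, fun L hL => ⟨fun i hi j hj => ?_, fun i i' j h1 h2 h3 h4 h5 => ?_⟩⟩
  · exact (h L hL).1 _ (by omega) _ (by omega)
  · have := (h L hL).2 (L - i) (2 * L - i') (2 * L - 1 - j) (by omega) (by omega) (by omega)
      (by omega) (by omega)
    rw [nr_refl h2 h3, show (2 * L - 1 - j) / 2 = L - 1 - j / 2 by omega] at this
    exact this

theorem SGood.refl {F} (h : SGood F) : SGood (fun L i j => F L (L - i) (L - 1 - j)) := by
  obtain ⟨M, h0, h⟩ := h
  refine ⟨M, h0, fun L hL => ⟨fun i hi j hj => ?_, fun i i' j h1 h2 h3 h4 h5 => ?_⟩⟩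
  · exact (h L hL).1 _ (by omega) _ (by omega)
  · have := (h L hL).2 (L - i) (2 * L - i') (2 * L - 1 - j) (by omega) (by omega) (by omega)
      (by omega) (by omega)
    rw [show (2 * L - 1 - j) / 2 = L - 1 - j / 2 by omega] at this
    exact this

theorem good_ind : Good (fun _ i j => if j < i then 1 else 0) := by
  refine ⟨1, zero_le_one, fun L hL => ⟨fun i hi j hj => ?_, fun i i' j h1 h2 h3 h4 h5 => ?_⟩⟩
  · simp only; split_ifs <;> simp
  · have hl : (0 : ℝ) ≤ 1 / L := by positivity
    rw [one_div] at hl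
    rw [one_mul]
    unfold nr
    simp only
    split_ifs <;> first | omega | (norm_num; try linarith)

theorem sum_Icc_int (f : ℤ → ℝ) (s : ℕ) :
    ∑ k ∈ Finset.Icc (-1 : ℤ) s, f k = f (-1) + ∑ k ∈ Finset.range (s + 1), f k := by
  induction s with
  | zero =>
    have : Finset.Icc (-1 : ℤ) ((0 : ℕ) : ℤ) = {-1, 0} := by ext k; simp; omega
    rw [this]; simp
  | succ s ih =>
    have : Finset.Icc (-1 : ℤ) ((s + 1 : ℕ) : ℤ)
        = insert ((s + 1 : ℕ) : ℤ) (Finset.Icc (-1 : ℤ) s) := by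
      ext k; simp only [Finset.mem_Icc, Finset.mem_insert]; push_cast; omega
    rw [this, Finset.sum_insert (by simp), ih, Finset.sum_range_succ _ (s + 1)]
    ring

theorem sum_Icc_range (f : ℤ → ℝ) (s n : ℕ) (hs : s < n) (h1 : f (-1) = 0)
    (h2 : ∀ k : ℕ, s < k → f k = 0) :
    ∑ k ∈ Finset.Icc (-1 : ℤ) s, f k = ∑ k ∈ Finset.range n, f k := by
  rw [sum_Icc_int, h1, zero_add]
  refine Finset.sum_subset (Finset.range_subset_range.2 hs) fun k _ hk => ?_
  exact h2 k (by simpa using hk)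

/-- One sweep (forward or reflected backward) at time `t`. -/
theorem sweep (a : Bool) (t : ℕ)
    (γ η : ℕ → ℤ → Bool → ℕ → ℕ → ℕ → ℝ) (cc : ℤ → ℤ → Bool → ℕ → ℕ → ℝ) (z : ℕ → ℝ)
    (init : ∀ L, 1 ≤ L → ∀ r : ℤ, -1 ≤ r → r ≤ t → ∀ b, ∀ j < L,
      γ t r b L 0 j = if r = -1 ∧ b = a then z L else 0)
    (step : ∀ L, 1 ≤ L → ∀ i < L, ∀ r : ℤ, -1 ≤ r → r ≤ t → ∀ b, ∀ j < L,
      γ t r b L (i + 1) j = γ t r b L i j + (if (t : ℤ) = r ∧ b = a ∧ i = j then 1 else 0)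
        + (1 / (L : ℝ)) * ∑ s ∈ Finset.range t,
          η s r b L (i + 1) j * (γ t s (!a) L i i - cc t s a L i))
    (cov : ∀ L, 1 ≤ L → ∀ s ≤ t, ∀ i < L, cc t s a L i =
      ∑ t' ∈ Finset.Icc (-1 : ℤ) t, ∑ s' ∈ Finset.Icc (-1 : ℤ) s, ∑ b : Bool,
        (1 / (L : ℝ)) * ∑ j ∈ Finset.range L,
          γ t t' b L i j * cc t' s' b L j * γ s s' b L i j)
    (symm : ∀ t s b L j, cc t s b L j = cc s t b L j)
    (mixed : ∀ t : ℤ, 0 ≤ t → ∀ b L j, cc t (-1) b L j = 0)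
    (vγ : ∀ (s : ℕ) (r : ℤ), (s : ℤ) < r → ∀ b L i j, γ s r b L i j = 0)
    (vη : ∀ (s : ℕ) (r : ℤ), (s : ℤ) < r → ∀ b L i j, η s r b L i j = 0)
    (histγ : ∀ s < t, ∀ r : ℤ, -1 ≤ r → r ≤ s → ∀ b, Good (γ s r b))
    (histη : ∀ s < t, ∀ r : ℤ, -1 ≤ r → r ≤ s → ∀ b, Good (η s r b))
    (histc : ∀ t' s' : ℤ, -1 ≤ t' → t' < t → -1 ≤ s' → s' < t → ∀ b,
      SGood (fun L _ j => cc t' s' b L j))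
    (hz : NGood z) :
    (∀ r : ℤ, -1 ≤ r → r < t → ∀ b, SGood (γ t r b)) ∧ (∀ b, Good (γ t t b)) ∧
    (∀ s : ℕ, s ≤ t → SGood (fun L _ j => cc t s a L j)) := by
  have diag : ∀ L, 1 ≤ L → ∀ b, ∀ i ≤ L, ∀ j < L,
      γ t t b L i j = if b = a ∧ j < i then 1 else 0 := by
    intro L hL b i
    induction i with
    | zero =>
      intro _ j hj
      rw [init L hL t (by omega) le_rfl b j hj, if_neg (by omega), if_neg (by omega)]
    | succ i ih =>
      intro hi j hj
      rw [step L hL i (by omega) t (by omega) le_rfl b j hj, ih (by omega) j hj,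
        Finset.sum_eq_zero]
      · by_cases hb : b = a
        · simp only [hb, true_and]
          split_ifs <;> first | omega | norm_num
        · simp [hb]
      · intro s hs
        have := Finset.mem_range.1 hs
        rw [vη s t (by omega)]; ring
  have diagG : ∀ b, Good (γ t t b) := by
    intro b
    by_cases hb : b = a
    · refine good_ind.congr fun L hL i hi j hj => ?_
      rw [diag L hL b i hi j hj]; simp [hb]
    · refine (SGood.const 0).good.congr fun L hL i hi j hj => ?_
      rw [diag L hL b i hi j hj]; simp [hb]
  let I : Finset (ℤ × Bool) := Finset.Icc (-1 : ℤ) (t - 1) ×ˢ Finset.univ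
  have hI : ∀ α, α ∈ I ↔ -1 ≤ α.1 ∧ α.1 < t := by
    intro α
    simp only [I, Finset.mem_product, Finset.mem_Icc, Finset.mem_univ, and_true]
    omega
  -- split covariance equation
  have split : ∀ n, ∀ L, 1 ≤ L → ∀ s < n, s ≤ t → ∀ i < L, cc t s a L i =
      (1 / (L : ℝ)) * ∑ j ∈ Finset.range L, ∑ α ∈ I,
        (∑ s' ∈ Finset.Icc (-1 : ℤ) s, cc α.1 s' α.2 L j * γ s s' α.2 L i j) * γ t α.1 α.2 L i j
      + (1 / (L : ℝ)) * ∑ j ∈ Finset.range i, ∑ s' ∈ Finset.range n,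
        γ s s' a L i j * cc t s' a L j := by
    intro n L hL s hsn hst i hi
    have e1 : cc t s a L i = (1 / (L : ℝ)) * ∑ j ∈ Finset.range L,
        ∑ t' ∈ Finset.Icc (-1 : ℤ) t, ∑ b : Bool, (∑ s' ∈ Finset.Icc (-1 : ℤ) s,
          cc t' s' b L j * γ s s' b L i j) * γ t t' b L i j := by
      rw [cov L hL s hst i hi]
      simp only [← Finset.mul_sum]
      congr 1
      rw [Finset.sum_comm (s := Finset.range L)]
      refine Finset.sum_congr rfl fun t' _ => ?_
      rw [Finset.sum_comm (s := Finset.range L), Finset.sum_comm]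
      refine Finset.sum_congr rfl fun b _ => ?_
      rw [Finset.sum_comm]
      refine Finset.sum_congr rfl fun j _ => ?_
      rw [Finset.sum_mul]
      refine Finset.sum_congr rfl fun s' _ => ?_
      ring
    rw [e1, ← mul_add]
    congr 1
    have hins : Finset.Icc (-1 : ℤ) t = insert (t : ℤ) (Finset.Icc (-1 : ℤ) (t - 1)) := by
      ext k; simp only [Finset.mem_Icc, Finset.mem_insert]; omega
    rw [hins]
    simp only [Finset.sum_insert (show (t : ℤ) ∉ Finset.Icc (-1 : ℤ) (t - 1) by simp)]
    rw [Finset.sum_add_distrib, add_comm]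
    congr 1
    · refine Finset.sum_congr rfl fun j _ => ?_
      simp only [I]
      rw [Finset.sum_product]
    · rw [← Finset.sum_subset (Finset.range_subset_range.2 hi.le)]
      · refine Finset.sum_congr rfl fun j hj => ?_
        have hj := Finset.mem_range.1 hj
        rw [Finset.sum_eq_single a]
        · rw [diag L hL a i hi.le j (by omega), if_pos ⟨rfl, hj⟩, mul_one]
          rw [← sum_Icc_range (fun s' => γ s s' a L i j * cc t s' a L j) s n hsn]
          · refine Finset.sum_congr rfl fun s' _ => ?_
            ring
          · rw [mixed t (by omega)]; ring
          · intro k hk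
            rw [vγ s k (by omega)]; ring
        · intro b _ hb
          rw [diag L hL b i hi.le j (by omega), if_neg (by tauto), mul_zero]
        · simp
      · intro j hj hj'
        have hj := Finset.mem_range.1 hj
        rw [Finset.mem_range] at hj'
        refine Finset.sum_eq_zero fun b _ => ?_
        rw [diag L hL b i hi.le j (by omega), if_neg (by tauto), mul_zero]
  -- one pass
  have pass : ∀ n, t ≤ n → n ≤ t + 1 →
      (∀ s < n, ∀ r : ℤ, -1 ≤ r → r ≤ s → ∀ b, Good (γ s r b)) →
      (∀ s < n, ∀ α ∈ I, Good (fun L i j => ∑ s' ∈ Finset.Icc (-1 : ℤ) s,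
        cc α.1 s' α.2 L j * γ s s' α.2 L i j)) →
      (∀ α ∈ I, SGood (γ t α.1 α.2)) ∧ (∀ s < n, SGood (fun L _ j => cc t s a L j)) := by
    intro n htn hnt hB hA
    refine generic I t n htn (fun s => ((s : ℤ), !a)) ?_ (fun α => γ t α.1 α.2)
      (fun s => cc t s a) (fun α L => if α.1 = -1 ∧ α.2 = a then z L else 0)
      (fun α s => η s α.1 α.2) (fun s α L i j => ∑ s' ∈ Finset.Icc (-1 : ℤ) s,
        cc α.1 s' α.2 L j * γ s s' α.2 L i j) (fun s s' => γ s s' a) ?_ hA ?_ ?_ ?_ ?_ ?_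
    · intro s hs
      rw [hI]; constructor <;> simp only <;> omega
    · intro α hα s hs
      rw [hI] at hα
      by_cases h : α.1 ≤ s
      · exact histη s hs α.1 hα.1 h α.2
      · exact (SGood.const 0).good.congr fun L hL i hi j hj => vη s α.1 (by omega) _ _ _ _
    · intro s hs s' hs'
      by_cases h : s' ≤ s
      · exact hB s hs s' (by omega) (by omega) a
      · exact (SGood.const 0).good.congr fun L hL i hi j hj => vγ s s' (by omega) _ _ _ _
    · intro α hα
      by_cases h : α.1 = -1 ∧ α.2 = a
      · simp only [if_pos h]; exact hz
      · simp only [if_neg h]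
        refine ⟨0, le_rfl, fun L hL => ?_⟩
        simp
    · intro L hL α hα j hj
      rw [hI] at hα
      exact init L hL α.1 hα.1 hα.2.le α.2 j hj
    · intro L hL α hα i hi j hj
      rw [hI] at hα
      rw [step L hL i hi α.1 hα.1 hα.2.le α.2 j hj, if_neg (by omega), add_zero]
    · intro L hL s hs i hi
      exact split n L hL s hs (by omega) i hi
  obtain ⟨p1, p2⟩ := pass t le_rfl (by omega) histγ (by
    intro s hs α hα
    rw [hI] at hα
    refine Good.sum _ (fun s' L i j => cc α.1 s' α.2 L j * γ s s' α.2 L i j) fun s' hs' => ?_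
    rw [Finset.mem_Icc] at hs'
    exact (histc α.1 s' hα.1 hα.2 hs'.1 (by omega) α.2).good.mul
      (histγ s hs s' hs'.1 hs'.2 α.2))
  have hγt : ∀ r : ℤ, -1 ≤ r → r < t → ∀ b, SGood (γ t r b) := by
    intro r h1 h2 b
    exact p1 (r, b) ((hI _).2 ⟨h1, h2⟩)
  have hγall : ∀ s < t + 1, ∀ r : ℤ, -1 ≤ r → r ≤ s → ∀ b, Good (γ s r b) := by
    intro s hs r h1 h2 b
    rcases Nat.lt_or_ge s t with h | h
    · exact histγ s h r h1 h2 b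
    obtain rfl : s = t := by omega
    rcases lt_or_eq_of_le h2 with h3 | rfl
    · exact (hγt r h1 h3 b).good
    · exact diagG b
  obtain ⟨_, p3⟩ := pass (t + 1) (by omega) le_rfl hγall (by
    intro s hs α hα
    rw [hI] at hα
    refine Good.sum _ (fun s' L i j => cc α.1 s' α.2 L j * γ s s' α.2 L i j) fun s' hs' => ?_
    rw [Finset.mem_Icc] at hs'
    have hg := hγall s hs s' hs'.1 hs'.2 α.2
    by_cases h : s' < t
    · exact (histc α.1 s' hα.1 hα.2 hs'.1 h α.2).good.mul hg
    · obtain rfl : s = t := by omega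
      obtain rfl : s' = s := by omega
      by_cases hb : α.2 = a
      · refine Good.mul ?_ hg
        rw [hb]
        by_cases h1 : α.1 = -1
        · refine (SGood.const 0).good.congr fun L hL i hi j hj => ?_
          rw [h1, symm]; exact mixed _ (by omega) _ _ _
        · obtain ⟨k, hk⟩ : ∃ k : ℕ, α.1 = k := ⟨α.1.toNat, by omega⟩
          refine (p2 k (by omega)).good.congr fun L hL i hi j hj => ?_
          rw [symm, hk]
      · refine (SGood.const 0).good.congr fun L hL i hi j hj => ?_
        rw [diag L hL _ i hi j hj, if_neg (by tauto), mul_zero])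
  exact ⟨hγt, diagG, fun s hs => p3 s (by omega)⟩

end LinTP

namespace LinTP

theorem integral_cells (L : ℕ) (hL : 1 ≤ L) (F : ℝ → ℝ)
    (hF : ∀ j < L, ∀ q : ℝ, (j : ℝ) / L < q → q ≤ ((j : ℝ) + 1) / L →
      F q = F (((j : ℝ) + 1) / L)) :
    ∫ q in Ioc (0 : ℝ) 1, F q = (1 / (L : ℝ)) * ∑ j ∈ Finset.range L, F (((j : ℝ) + 1) / L) := by
  have hLp : (0 : ℝ) < L := by exact_mod_cast hL
  have hle : ∀ k : ℕ, (k : ℝ) / L ≤ ((k + 1 : ℕ) : ℝ) / L := by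
    intro k; gcongr; push_cast; linarith
  have hcongr : ∀ k < L, ∀ q ∈ Ioc ((k : ℝ) / L) (((k + 1 : ℕ) : ℝ) / L),
      F q = F (((k : ℝ) + 1) / L) := by
    intro k hk q hq
    refine hF k hk q hq.1 ?_
    have := hq.2
    push_cast at this
    exact this
  have h1 := intervalIntegral.sum_integral_adjacent_intervals (f := F) (μ := volume)
    (a := fun k : ℕ => (k : ℝ) / L) (n := L) (by
      intro k hk
      rw [intervalIntegrable_iff_integrableOn_Ioc_of_le (hle k)]
      refine IntegrableOn.congr_fun (f := fun _ => F (((k : ℝ) + 1) / L)) ?_ ?_ measurableSet_Ioc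
      · exact integrableOn_const (by simp)
      · intro q hq
        exact (hcongr k hk q hq).symm)
  simp only [Nat.cast_zero, zero_div, div_self hLp.ne'] at h1
  rw [← intervalIntegral.integral_of_le zero_le_one, ← h1, Finset.mul_sum]
  refine Finset.sum_congr rfl fun k hk => ?_
  rw [intervalIntegral.integral_of_le (hle k),
    setIntegral_congr_fun measurableSet_Ioc (hcongr k (Finset.mem_range.1 hk)),
    ← intervalIntegral.integral_of_le (hle k), intervalIntegral.integral_const, smul_eq_mul]
  congr 1
  push_cast
  field_simp
  ring

theorem cell_ceil {L j : ℕ} (hL : 1 ≤ L) {q : ℝ} (h1 : (j : ℝ) / L < q)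
    (h2 : q ≤ ((j : ℝ) + 1) / L) : ⌈(L : ℝ) * q⌉ = (j : ℤ) + 1 := by
  have hLp : (0 : ℝ) < L := by exact_mod_cast hL
  rw [div_lt_iff₀ hLp] at h1
  rw [le_div_iff₀ hLp] at h2
  rw [Int.ceil_eq_iff]
  push_cast
  constructor <;> linarith

theorem cell_pos {L j : ℕ} {q : ℝ} (h1 : (j : ℝ) / L < q) : 0 < q :=
  lt_of_le_of_lt (by positivity) h1

theorem cell_le {L j : ℕ} (hj : j < L) {q : ℝ} (h2 : q ≤ ((j : ℝ) + 1) / L) : q ≤ 1 := by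
  have hLp : (0 : ℝ) < L := by exact_mod_cast (by omega : 0 < L)
  refine h2.trans ?_
  rw [div_le_one hLp]
  exact_mod_cast hj

theorem cell_end {L j : ℕ} (hL : 1 ≤ L) : (j : ℝ) / L < ((j : ℝ) + 1) / L := by
  have hLp : (0 : ℝ) < L := by exact_mod_cast hL
  gcongr
  linarith

section one
variable {T L : ℕ} {ξ : ℕ → ℝ} {ℓ' : ℕ → ℝ → ℝ} {Γ : ℕ → ℤ → Bool → Bool → ℝ → ℝ → ℝ}
  {C : ℤ → ℤ → Bool → ℝ → ℝ} {f χ : ℕ → ℝ}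

theorem fstep (hL : 1 ≤ L) (h : IsLinearTP T L ξ ℓ' Γ C f χ) (t : ℕ) (ht : t < T) (i : ℕ)
    (hi : i < L) (r : ℤ) (hr : -1 ≤ r) (hr' : r ≤ t) (b : Bool) (q : ℝ) (hq : 0 < q)
    (hq' : q ≤ 1) :
    Γ t r false b (((i : ℝ) + 1) / L) q = Γ t r false b ((i : ℝ) / L) q
      + (if (t : ℤ) = r ∧ b = false ∧ (i : ℤ) + 1 = ⌈(L : ℝ) * q⌉ then 1 else 0)
      + (1 / (L : ℝ)) * ∑ s ∈ Finset.range t, Γ s r true b (((i : ℝ) + 1) / L) q *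
          (Γ t (s : ℤ) false true ((i : ℝ) / L) (((i : ℝ) + 1) / L)
            - C (t : ℤ) (s : ℤ) false (((i : ℝ) + 1) / L)) := by
  have := h.fwd_step t ht (i + 1) (by omega) hi r hr hr' b (((i : ℝ) + 1) / L) q (by
    push_cast; rw [add_sub_cancel_right]; exact cell_end hL) (by push_cast; exact le_rfl) hq hq'
  push_cast at this
  simpa only [add_sub_cancel_right] using this

theorem bstep (hL : 1 ≤ L) (h : IsLinearTP T L ξ ℓ' Γ C f χ) (t : ℕ) (ht : t < T) (i : ℕ)
    (hi : i < L) (r : ℤ) (hr : -1 ≤ r) (hr' : r ≤ t) (b : Bool) (q : ℝ) (hq : 0 < q)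
    (hq' : q ≤ 1) :
    Γ t r true b ((i : ℝ) / L) q = Γ t r true b (((i : ℝ) + 1) / L) q
      + (if (t : ℤ) = r ∧ b = true ∧ (i : ℤ) + 1 = ⌈(L : ℝ) * q⌉ then 1 else 0)
      + (1 / (L : ℝ)) * ∑ s ∈ Finset.range t, Γ s r false b ((i : ℝ) / L) q *
          (Γ t (s : ℤ) true false (((i : ℝ) + 1) / L) (((i : ℝ) + 1) / L)
            - C (t : ℤ) (s : ℤ) true (((i : ℝ) + 1) / L)) := by
  have hLp : (0 : ℝ) < L := by exact_mod_cast hL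
  have := h.bwd_step t ht (i + 1) (by omega) hi r hr hr' b ((i : ℝ) / L) q (by
    push_cast; gcongr; linarith) (by push_cast; rw [add_sub_cancel_right]) (by positivity) hq hq'
  push_cast at this
  simpa only [add_sub_cancel_right] using this

theorem qstep (hL : 1 ≤ L) (h : IsLinearTP T L ξ ℓ' Γ C f χ) (t : ℕ) : t < T →
    ∀ (r : ℤ), -1 ≤ r → r ≤ t → ∀ (a b : Bool), ∀ i ≤ L, ∀ j < L, ∀ q : ℝ,
      (j : ℝ) / L < q → q ≤ ((j : ℝ) + 1) / L →
      Γ t r a b ((i : ℝ) / L) q = Γ t r a b ((i : ℝ) / L) (((j : ℝ) + 1) / L) := by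
  have hLp : (0 : ℝ) < L := by exact_mod_cast hL
  induction t using Nat.strong_induction_on with
  | _ t ih =>
  intro ht r hr hr' a b i hi j hj q hq hq'
  have p1 := cell_pos hq
  have p2 := cell_le hj hq'
  have p3 := cell_pos (cell_end (L := L) (j := j) hL)
  have p4 := cell_le hj (le_refl (((j : ℝ) + 1) / L))
  have c1 := cell_ceil hL hq hq'
  have c2 := cell_ceil hL (cell_end (L := L) (j := j) hL) le_rfl
  have ih' : ∀ s ∈ Finset.range t, ∀ a, ∀ k ≤ L,
      Γ s r a b ((k : ℝ) / L) q = Γ s r a b ((k : ℝ) / L) (((j : ℝ) + 1) / L) := by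
    intro s hs a k hk
    have hs := Finset.mem_range.1 hs
    by_cases h' : r ≤ s
    · exact ih s hs (by omega) r hr h' a b k hk j hj q hq hq'
    · rw [h.Γ_vanish s r (by omega), h.Γ_vanish s r (by omega)]
  cases a with
  | false =>
    induction i with
    | zero =>
      simp only [Nat.cast_zero, zero_div]
      rw [h.fwd_init t ht r hr hr' b q p1 p2, h.fwd_init t ht r hr hr' b _ p3 p4]
    | succ i ihi =>
      have := ihi (by omega)
      push_cast
      rw [fstep hL h t ht i (by omega) r hr hr' b q p1 p2,
        fstep hL h t ht i (by omega) r hr hr' b _ p3 p4, this, c1, c2]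
      congr 2
      refine Finset.sum_congr rfl fun s hs => ?_
      have := ih' s hs true (i + 1) hi
      push_cast at this
      rw [this]
  | true =>
    obtain ⟨k, hk⟩ : ∃ k, i = L - k ∧ k ≤ L := ⟨L - i, by omega, by omega⟩
    obtain ⟨rfl, hk⟩ := hk
    clear hi
    induction k with
    | zero =>
      simp only [Nat.sub_zero, div_self hLp.ne']
      rw [h.bwd_init t ht r hr hr' b q p1 p2, h.bwd_init t ht r hr hr' b _ p3 p4]
    | succ k ihk =>
      have := ihk (by omega)
      obtain ⟨i, hi⟩ : ∃ i, i = L - (k + 1) := ⟨_, rfl⟩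
      rw [← hi]
      rw [show L - k = i + 1 by omega] at this
      push_cast at this
      rw [bstep hL h t ht i (by omega) r hr hr' b q p1 p2,
        bstep hL h t ht i (by omega) r hr hr' b _ p3 p4, this, c1, c2]
      congr 2
      refine Finset.sum_congr rfl fun s hs => ?_
      rw [ih' s hs false i (by omega)]

theorem cstep (hL : 1 ≤ L) (h : IsLinearTP T L ξ ℓ' Γ C f χ) (t s : ℤ) (ht : -1 ≤ t)
    (ht' : t < T) (hs : -1 ≤ s) (hs' : s < T) (b : Bool) (j : ℕ) (hj : j < L) (q : ℝ)
    (hq : (j : ℝ) / L < q) (hq' : q ≤ ((j : ℝ) + 1) / L) :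
    C t s b q = C t s b (((j : ℝ) + 1) / L) := by
  wlog hst : s ≤ t generalizing t s with H
  · rw [h.C_symm t s, h.C_symm t s]
    exact H s t hs hs' ht ht' (by omega)
  by_cases h1 : s = -1
  · subst h1
    by_cases h2 : t = -1
    · subst h2; rw [h.C_base, h.C_base]
    · rw [h.C_mixed t (by omega), h.C_mixed t (by omega)]
  obtain ⟨s, rfl⟩ : ∃ k : ℕ, s = k := ⟨s.toNat, by omega⟩
  obtain ⟨t, rfl⟩ : ∃ k : ℕ, t = k := ⟨t.toNat, by omega⟩
  have e1 : (((j + 1 : ℕ) : ℝ) - 1) / L < q := by push_cast; rwa [add_sub_cancel_right]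
  have e2 : q ≤ ((j + 1 : ℕ) : ℝ) / L := by push_cast; exact hq'
  have e3 : (((j + 1 : ℕ) : ℝ) - 1) / L < ((j : ℝ) + 1) / L := by
    push_cast; rw [add_sub_cancel_right]; exact cell_end hL
  have e4 : ((j : ℝ) + 1) / L ≤ ((j + 1 : ℕ) : ℝ) / L := by push_cast; exact le_rfl
  cases b with
  | false =>
    rw [h.fwd_C t (by omega) s (by omega) (j + 1) (by omega) hj q e1 e2,
      h.fwd_C t (by omega) s (by omega) (j + 1) (by omega) hj _ e3 e4]
  | true =>
    rw [h.bwd_C t (by omega) s (by omega) (j + 1) (by omega) hj q e1 e2,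
      h.bwd_C t (by omega) s (by omega) (j + 1) (by omega) hj _ e3 e4]

theorem int_eq (hL : 1 ≤ L) (h : IsLinearTP T L ξ ℓ' Γ C f χ) (t s : ℕ) (ht : t < T) (hs : s < T)
    (t' s' : ℤ) (h1 : -1 ≤ t') (h2 : t' ≤ t) (h3 : -1 ≤ s') (h4 : s' ≤ s) (a b : Bool) (i : ℕ)
    (hi : i ≤ L) :
    ∫ q in Ioc (0 : ℝ) 1, Γ t t' a b ((i : ℝ) / L) q * C t' s' b q * Γ s s' a b ((i : ℝ) / L) q
      = (1 / (L : ℝ)) * ∑ j ∈ Finset.range L, Γ t t' a b ((i : ℝ) / L) (((j : ℝ) + 1) / L)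
          * C t' s' b (((j : ℝ) + 1) / L) * Γ s s' a b ((i : ℝ) / L) (((j : ℝ) + 1) / L) := by
  refine integral_cells L hL _ fun j hj q hq hq' => ?_
  rw [qstep hL h t ht t' h1 h2 a b i hi j hj q hq hq',
    qstep hL h s hs s' h3 h4 a b i hi j hj q hq hq',
    cstep hL h t' s' h1 (by omega) h3 (by omega) b j hj q hq hq']

theorem fcov (hL : 1 ≤ L) (h : IsLinearTP T L ξ ℓ' Γ C f χ) (t s : ℕ) (ht : t < T) (hs : s ≤ t)
    (i : ℕ) (hi : i < L) :
    C t s false (((i : ℝ) + 1) / L) =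
      ∑ t' ∈ Finset.Icc (-1 : ℤ) t, ∑ s' ∈ Finset.Icc (-1 : ℤ) s, ∑ b : Bool,
        (1 / (L : ℝ)) * ∑ j ∈ Finset.range L, Γ t t' false b ((i : ℝ) / L) (((j : ℝ) + 1) / L)
          * C t' s' b (((j : ℝ) + 1) / L) * Γ s s' false b ((i : ℝ) / L) (((j : ℝ) + 1) / L) := by
  have := h.fwd_C t ht s hs (i + 1) (by omega) hi (((i : ℝ) + 1) / L) (by
    push_cast; rw [add_sub_cancel_right]; exact cell_end hL) (by push_cast; exact le_rfl)
  push_cast at this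
  simp only [add_sub_cancel_right] at this
  rw [this]
  refine Finset.sum_congr rfl fun t' ht' => Finset.sum_congr rfl fun s' hs' =>
    Finset.sum_congr rfl fun b _ => ?_
  rw [Finset.mem_Icc] at ht' hs'
  exact int_eq hL h t s ht (by omega) t' s' ht'.1 ht'.2 hs'.1 hs'.2 false b i hi.le

theorem bcov (hL : 1 ≤ L) (h : IsLinearTP T L ξ ℓ' Γ C f χ) (t s : ℕ) (ht : t < T) (hs : s ≤ t)
    (i : ℕ) (hi : i < L) :
    C t s true (((i : ℝ) + 1) / L) =
      ∑ t' ∈ Finset.Icc (-1 : ℤ) t, ∑ s' ∈ Finset.Icc (-1 : ℤ) s, ∑ b : Bool,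
        (1 / (L : ℝ)) * ∑ j ∈ Finset.range L,
          Γ t t' true b (((i + 1 : ℕ) : ℝ) / L) (((j : ℝ) + 1) / L)
          * C t' s' b (((j : ℝ) + 1) / L)
          * Γ s s' true b (((i + 1 : ℕ) : ℝ) / L) (((j : ℝ) + 1) / L) := by
  have := h.bwd_C t ht s hs (i + 1) (by omega) hi (((i : ℝ) + 1) / L) (by
    push_cast; rw [add_sub_cancel_right]; exact cell_end hL) (by push_cast; exact le_rfl)
  rw [this]
  refine Finset.sum_congr rfl fun t' ht' => Finset.sum_congr rfl fun s' hs' =>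
    Finset.sum_congr rfl fun b _ => ?_
  rw [Finset.mem_Icc] at ht' hs'
  exact int_eq hL h t s ht (by omega) t' s' ht'.1 ht'.2 hs'.1 hs'.2 true b (i + 1) hi

end one

/-- Discretized coefficient family. -/
noncomputable def gF (Γ : ℕ → ℕ → ℤ → Bool → Bool → ℝ → ℝ → ℝ) (t : ℕ) (r : ℤ) (a b : Bool) (L i j : ℕ) : ℝ :=
  Γ L t r a b ((i : ℝ) / L) (((j : ℝ) + 1) / L)

/-- Discretized covariance family. -/
noncomputable def cF (C : ℕ → ℤ → ℤ → Bool → ℝ → ℝ) (t s : ℤ) (b : Bool) (L j : ℕ) : ℝ :=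
  C L t s b (((j : ℝ) + 1) / L)

theorem lip_good (φ : ℝ → ℝ) (hφ : LocallyLipschitz φ) (z : ℕ → ℝ) (hz : NGood z) :
    NGood (fun L => φ (z L)) := by
  obtain ⟨M, hM0, hM⟩ := hz
  obtain ⟨K, hK⟩ := LocallyLipschitzOn.exists_lipschitzOnWith_of_compact
    (isCompact_Icc (a := -M) (b := M)) (hφ.locallyLipschitzOn)
  have hmem : ∀ L, 1 ≤ L → z L ∈ Icc (-M) M := fun L hL => abs_le.1 (hM L hL).1
  have h0 : (0 : ℝ) ∈ Icc (-M) M := ⟨by linarith, hM0⟩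
  have hKd : ∀ x ∈ Icc (-M) M, ∀ y ∈ Icc (-M) M, |φ x - φ y| ≤ K * |x - y| := by
    intro x hx y hy
    have := hK.dist_le_mul x hx y hy
    simpa only [Real.dist_eq] using this
  refine ⟨|φ 0| + K * M, by positivity, fun L hL => ⟨?_, ?_⟩⟩
  · have h1 := hKd _ (hmem L hL) 0 h0
    rw [sub_zero] at h1
    have h2 := (hM L hL).1
    have h3 : (K : ℝ) * |z L| ≤ K * M := by gcongr
    have h4 := abs_sub_abs_le_abs_sub (φ (z L)) (φ 0)
    linarith
  · have h1 := hKd _ (hmem L hL) _ (hmem (2 * L) (by omega))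
    have h2 := (hM L hL).2
    have h3 : (K : ℝ) * |z L - z (2 * L)| ≤ K * (M * (1 / L)) := by gcongr
    have h4 : 0 ≤ |φ 0| * (1 / (L : ℝ)) := by positivity
    linarith

theorem main_good (T : ℕ) (ξ : ℕ → ℝ) (ℓ' : ℕ → ℝ → ℝ)
    (hlip : ∀ t : ℕ, LocallyLipschitz (ℓ' t))
    (Γ : ℕ → ℕ → ℤ → Bool → Bool → ℝ → ℝ → ℝ)
    (C : ℕ → ℤ → ℤ → Bool → ℝ → ℝ)
    (f χ : ℕ → ℕ → ℝ)
    (hTP : ∀ L : ℕ, 1 ≤ L → IsLinearTP T L ξ ℓ' (Γ L) (C L) (f L) (χ L))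
    (hsymm : ∀ t s b L j, cF C t s b L j = cF C s t b L j)
    (hbase : ∀ b L j, cF C (-1) (-1) b L j = 1)
    (hmixed : ∀ t : ℤ, 0 ≤ t → ∀ b L j, cF C t (-1) b L j = 0)
    (hvan : ∀ (s : ℕ) (r : ℤ), (s : ℤ) < r → ∀ a b L i j, gF Γ s r a b L i j = 0) (t : ℕ) :
    t ≤ T →
    (∀ s < t, ∀ r : ℤ, -1 ≤ r → r ≤ s → ∀ a b, Good (gF Γ s r a b)) ∧
    (∀ s < t, ∀ r : ℤ, -1 ≤ r → r < s → ∀ a b, SGood (gF Γ s r a b)) ∧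
    (∀ t' s' : ℤ, -1 ≤ t' → t' < t → -1 ≤ s' → s' < t → ∀ b,
      SGood (fun L _ j => cF C t' s' b L j)) := by
  induction t with
  | zero =>
    intro _
    refine ⟨by intro s hs; omega, by intro s hs; omega, ?_⟩
    intro t' s' h1 h2 h3 h4 b
    obtain rfl : t' = -1 := by omega
    obtain rfl : s' = -1 := by omega
    refine (SGood.const 1).congr fun L hL i hi j hj => hbase _ _ _
  | succ t ih =>
    intro htT
    obtain ⟨ih1, ih2, ih3⟩ := ih (by omega)
    have ht : t < T := by omega
    -- forward sweep
    obtain ⟨f1, f2, f3⟩ := sweep false t (fun t r b => gF Γ t r false b)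
      (fun t r b => gF Γ t r true b) (cF C) (fun _ => ξ t)
      (by
        intro L hL r h1 h2 b j hj
        have := (hTP L hL).fwd_init t ht r h1 h2 b (((j : ℝ) + 1) / L)
          (cell_pos (cell_end (L := L) (j := j) hL)) (cell_le hj le_rfl)
        simp only [gF, Nat.cast_zero, zero_div]
        exact this)
      (by
        intro L hL i hi r h1 h2 b j hj
        have := fstep hL (hTP L hL) t ht i hi r h1 h2 b (((j : ℝ) + 1) / L)
          (cell_pos (cell_end (L := L) (j := j) hL)) (cell_le hj le_rfl)
        rw [cell_ceil hL (cell_end (L := L) (j := j) hL) le_rfl] at this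
        simp only [gF, cF, Nat.cast_add, Nat.cast_one, Bool.not_false]
        rw [this]
        congr 2
        simp only [add_left_inj, Nat.cast_inj])
      (fun L hL s hs i hi => fcov hL (hTP L hL) t s ht hs i hi)
      hsymm hmixed (fun s r h b L i j => hvan s r h _ _ _ _ _)
      (fun s r h b L i j => hvan s r h _ _ _ _ _)
      (fun s hs r h1 h2 b => ih1 s hs r h1 h2 _ _)
      (fun s hs r h1 h2 b => ih1 s hs r h1 h2 _ _) ih3
      ⟨|ξ t|, abs_nonneg _, fun L hL => ⟨le_rfl, by rw [sub_self, abs_zero]; positivity⟩⟩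
    -- output
    have hf : NGood (fun L => f L t) := by
      obtain ⟨M, h0, hM⟩ := f1 (-1) le_rfl (by omega) true
      have hval : ∀ L, 1 ≤ L → f L t = gF Γ t (-1) false true L L (L - 1) := by
        intro L hL
        have hLp : (0 : ℝ) < L := by exact_mod_cast hL
        rw [(hTP L hL).f_def t ht, gF, Nat.cast_sub hL, Nat.cast_one, sub_add_cancel,
          div_self hLp.ne']
      refine ⟨M, h0, fun L hL => ⟨?_, ?_⟩⟩
      · simp only [hval L hL]; exact (hM L hL).1 L le_rfl (L - 1) (by omega)
      · have := (hM L hL).2 L (2 * L) (2 * L - 1) le_rfl le_rfl (by omega) (by omega) (by omega)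
        rw [show (2 * L - 1) / 2 = L - 1 by omega] at this
        simp only [hval L hL, hval (2 * L) (by omega)]
        exact this
    have hχ : NGood (fun L => χ L t) := by
      obtain ⟨M, h0, hM⟩ := lip_good (ℓ' t) (hlip t) _ hf
      refine ⟨M, h0, fun L hL => ?_⟩
      simp only [(hTP L hL).χ_def t ht, (hTP (2 * L) (by omega)).χ_def t ht]
      exact hM L hL
    -- backward sweep
    obtain ⟨b1, b2, b3⟩ := sweep true t (fun t r b L i j => gF Γ t r true b L (L - i) (L - 1 - j))
      (fun t r b L i j => gF Γ t r false b L (L - i) (L - 1 - j))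
      (fun t s b L j => cF C t s b L (L - 1 - j)) (fun L => χ L t)
      (by
        intro L hL r h1 h2 b j hj
        have hLp : (0 : ℝ) < L := by exact_mod_cast hL
        have := (hTP L hL).bwd_init t ht r h1 h2 b ((((L - 1 - j : ℕ) : ℝ) + 1) / L)
          (cell_pos (cell_end (L := L) hL)) (cell_le (by omega) le_rfl)
        simp only [gF, Nat.sub_zero, div_self hLp.ne']
        exact this)
      (by
        intro L hL i hi r h1 h2 b j hj
        obtain ⟨k, hk⟩ : ∃ k, k = L - (i + 1) := ⟨_, rfl⟩
        have := bstep hL (hTP L hL) t ht k (by omega) r h1 h2 b ((((L - 1 - j : ℕ) : ℝ) + 1) / L)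
          (cell_pos (cell_end (L := L) hL)) (cell_le (by omega) le_rfl)
        rw [cell_ceil hL (cell_end (L := L) hL) le_rfl] at this
        rw [← hk, show L - i = k + 1 by omega, show L - 1 - i = k by omega]
        simp only [gF, cF, Nat.cast_add, Nat.cast_one, Bool.not_true]
        rw [this]
        congr 2
        have : ((k : ℤ) + 1 = ((L - 1 - j : ℕ) : ℤ) + 1) ↔ i = j := by omega
        simp only [this])
      (by
        intro L hL s hs i hi
        have := bcov hL (hTP L hL) t s ht hs (L - 1 - i) (by omega)
        rw [show L - 1 - i + 1 = L - i by omega] at this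
        simp only [cF]
        rw [this]
        refine Finset.sum_congr rfl fun t' _ => Finset.sum_congr rfl fun s' _ =>
          Finset.sum_congr rfl fun b _ => ?_
        congr 1
        rw [← Finset.sum_range_reflect]
        rfl)
      (fun t s b L j => hsymm t s b L _) (fun t h b L j => hmixed t h b L _)
      (fun s r h b L i j => hvan s r h _ _ _ _ _)
      (fun s r h b L i j => hvan s r h _ _ _ _ _)
      (fun s hs r h1 h2 b => (ih1 s hs r h1 h2 _ _).refl)
      (fun s hs r h1 h2 b => (ih1 s hs r h1 h2 _ _).refl)
      (fun t' s' h1 h2 h3 h4 b => (ih3 t' s' h1 h2 h3 h4 b).refl) hχ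
    have g1 : ∀ r : ℤ, -1 ≤ r → r < t → ∀ b, SGood (gF Γ t r true b) := by
      intro r h1 h2 b
      refine (b1 r h1 h2 b).refl.congr fun L hL i hi j hj => ?_
      rw [show L - (L - i) = i by omega, show L - 1 - (L - 1 - j) = j by omega]
    have g2 : ∀ b, Good (gF Γ t t true b) := by
      intro b
      refine (b2 b).refl.congr fun L hL i hi j hj => ?_
      rw [show L - (L - i) = i by omega, show L - 1 - (L - 1 - j) = j by omega]
    have g3 : ∀ s : ℕ, s ≤ t → SGood (fun L _ j => cF C t s true L j) := by
      intro s hs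
      refine (b3 s hs).refl.congr fun L hL i hi j hj => ?_
      rw [show L - 1 - (L - 1 - j) = j by omega]
    have hS : ∀ s < t + 1, ∀ r : ℤ, -1 ≤ r → r < s → ∀ a b, SGood (gF Γ s r a b) := by
      intro s hs r h1 h2 a b
      rcases Nat.lt_or_ge s t with h | h
      · exact ih2 s h r h1 h2 a b
      obtain rfl : s = t := by omega
      cases a
      · exact f1 r h1 h2 b
      · exact g1 r h1 h2 b
    refine ⟨?_, hS, ?_⟩
    · intro s hs r h1 h2 a b
      rcases lt_or_eq_of_le h2 with h3 | rfl
      · exact (hS s hs r h1 h3 a b).good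
      rcases Nat.lt_or_ge s t with h | h
      · exact ih1 s h _ h1 h2 a b
      obtain rfl : s = t := by omega
      cases a
      · exact f2 b
      · exact g2 b
    · have hct : ∀ s : ℤ, -1 ≤ s → s ≤ t → ∀ b, SGood (fun L _ j => cF C t s b L j) := by
        intro s h1 h2 b
        by_cases h3 : s = -1
        · subst h3
          exact (SGood.const 0).congr fun L hL i hi j hj => hmixed _ (by omega) _ _ _
        · obtain ⟨s, rfl⟩ : ∃ k : ℕ, s = k := ⟨s.toNat, by omega⟩
          cases b
          · exact f3 s (by omega)
          · exact g3 s (by omega)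
      intro t' s' h1 h2 h3 h4 b
      by_cases e1 : t' = t
      · subst e1; exact hct s' h3 (by omega) b
      by_cases e2 : s' = t
      · subst e2
        exact (hct t' h1 (by omega) b).congr fun L hL i hi j hj => hsymm _ _ _ _ _
      exact ih3 t' s' h1 (by omega) h3 (by omega) b

end LinTP


namespace LinTP

theorem ceil_two (y : ℝ) (hy : 0 ≤ y) : 2 * ⌈y⌉₊ ≤ ⌈2 * y⌉₊ + 1 ∧ ⌈2 * y⌉₊ ≤ 2 * ⌈y⌉₊ := by
  constructor
  · have h1 := Nat.ceil_lt_add_one hy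
    have h2 := Nat.le_ceil (2 * y)
    have h3 : (2 * (⌈y⌉₊ : ℝ)) < (⌈2 * y⌉₊ : ℝ) + 2 := by linarith
    have h4 : 2 * ⌈y⌉₊ < ⌈2 * y⌉₊ + 2 := by exact_mod_cast h3
    omega
  · rw [Nat.ceil_le]
    push_cast
    have := Nat.le_ceil y
    linarith

theorem ceil_cell {L : ℕ} (hL : 1 ≤ L) {x : ℝ} (hx : 0 < x) (hx1 : x ≤ 1) :
    1 ≤ ⌈(L : ℝ) * x⌉₊ ∧ ⌈(L : ℝ) * x⌉₊ ≤ L ∧ ((⌈(L : ℝ) * x⌉₊ : ℝ) - 1) / L < x ∧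
      x ≤ (⌈(L : ℝ) * x⌉₊ : ℝ) / L := by
  have hLp : (0 : ℝ) < L := by exact_mod_cast hL
  have h0 : 0 < (L : ℝ) * x := by positivity
  refine ⟨Nat.ceil_pos.2 h0, ?_, ?_, ?_⟩
  · rw [Nat.ceil_le]; nlinarith
  · rw [div_lt_iff₀ hLp]
    have := Nat.ceil_lt_add_one h0.le
    linarith
  · rw [le_div_iff₀ hLp]
    have := Nat.le_ceil ((L : ℝ) * x)
    linarith

theorem sgood_cauchy (F : ℕ → ℕ → ℕ → ℝ) (hF : SGood F) (p q : ℝ) (hp : 0 ≤ p) (hp1 : p ≤ 1)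
    (hq : 0 < q) (hq1 : q ≤ 1) :
    CauchySeq (fun k : ℕ =>
      F (2 ^ k) ⌈((2 ^ k : ℕ) : ℝ) * p⌉₊ (⌈((2 ^ k : ℕ) : ℝ) * q⌉₊ - 1)) := by
  obtain ⟨M, hM0, hM⟩ := hF
  refine cauchySeq_of_le_geometric (1 / 2) M (by norm_num) fun k => ?_
  have hL : 1 ≤ 2 ^ k := Nat.one_le_two_pow
  rw [Real.dist_eq, pow_succ, mul_comm (2 ^ k) 2]
  have e : (1 / 2 : ℝ) ^ k = 1 / ((2 ^ k : ℕ) : ℝ) := by push_cast; rw [one_div_pow]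
  rw [e]
  generalize 2 ^ k = L at hL
  have hLp : (0 : ℝ) < L := by exact_mod_cast hL
  obtain ⟨a1, a2⟩ := ceil_two ((L : ℝ) * p) (by positivity)
  obtain ⟨b1, b2⟩ := ceil_two ((L : ℝ) * q) (by positivity)
  obtain ⟨c1, c2, -, -⟩ := ceil_cell hL hq hq1
  obtain ⟨d1, d2, -, -⟩ := ceil_cell (L := 2 * L) (by omega) hq hq1
  have e1 : ((2 * L : ℕ) : ℝ) * p = 2 * ((L : ℝ) * p) := by push_cast; ring
  have e2 : ((2 * L : ℕ) : ℝ) * q = 2 * ((L : ℝ) * q) := by push_cast; ring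
  have f1 : ⌈(L : ℝ) * p⌉₊ ≤ L := by rw [Nat.ceil_le]; nlinarith
  rw [e2] at d1 d2
  rw [e1, e2]
  have key := (hM L hL).2 ⌈(L : ℝ) * p⌉₊ ⌈2 * ((L : ℝ) * p)⌉₊ (⌈2 * ((L : ℝ) * q)⌉₊ - 1)
    f1 (by omega) (by omega) a1 (by omega)
  rw [show (⌈2 * ((L : ℝ) * q)⌉₊ - 1) / 2 = ⌈(L : ℝ) * q⌉₊ - 1 by omega] at key
  exact key

theorem gF_eq {T : ℕ} {ξ : ℕ → ℝ} {ℓ' : ℕ → ℝ → ℝ}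
    {Γ : ℕ → ℕ → ℤ → Bool → Bool → ℝ → ℝ → ℝ}
    {C : ℕ → ℤ → ℤ → Bool → ℝ → ℝ} {f χ : ℕ → ℕ → ℝ} {L : ℕ} (hL : 1 ≤ L)
    (h : IsLinearTP T L ξ ℓ' (Γ L) (C L) (f L) (χ L)) (t : ℕ) (ht : t < T) (s : ℤ)
    (hs : -1 ≤ s) (hs' : s ≤ t) (a b : Bool) (p q : ℝ) (hp : 0 ≤ p) (hp1 : p ≤ 1)
    (hq : 0 < q) (hq1 : q ≤ 1) :
    Γ L t s a b p q = gF Γ t s a b L ⌈(L : ℝ) * p⌉₊ (⌈(L : ℝ) * q⌉₊ - 1) := by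
  obtain ⟨c1, c2, c3, c4⟩ := ceil_cell hL hq hq1
  have hi : ⌈(L : ℝ) * p⌉₊ ≤ L := by
    have hLp : (0 : ℝ) < L := by exact_mod_cast hL
    rw [Nat.ceil_le]; nlinarith
  have hrow : Γ L t s a b p q = Γ L t s a b ((⌈(L : ℝ) * p⌉₊ : ℝ) / L) q := by
    rcases hp.eq_or_lt with h0 | h0
    · rw [← h0]; simp
    · obtain ⟨d1, d2, d3, d4⟩ := ceil_cell hL h0 hp1
      exact h.Γ_const t ht s hs hs' a b _ d1 d2 p q d3 d4 hq hq1
  have ec : ((⌈(L : ℝ) * q⌉₊ - 1 : ℕ) : ℝ) = (⌈(L : ℝ) * q⌉₊ : ℝ) - 1 := by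
    rw [Nat.cast_sub c1, Nat.cast_one]
  rw [hrow]
  exact qstep hL h t ht s hs hs' a b _ hi _ (by omega) q (by rwa [ec])
    (by rwa [ec, sub_add_cancel])

theorem cF_eq {T : ℕ} {ξ : ℕ → ℝ} {ℓ' : ℕ → ℝ → ℝ}
    {Γ : ℕ → ℕ → ℤ → Bool → Bool → ℝ → ℝ → ℝ}
    {C : ℕ → ℤ → ℤ → Bool → ℝ → ℝ} {f χ : ℕ → ℕ → ℝ} {L : ℕ} (hL : 1 ≤ L)
    (h : IsLinearTP T L ξ ℓ' (Γ L) (C L) (f L) (χ L)) (t s : ℤ) (ht : -1 ≤ t) (ht' : t < T)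
    (hs : -1 ≤ s) (hs' : s < T) (b : Bool) (q : ℝ)
    (hq : 0 < q) (hq1 : q ≤ 1) :
    C L t s b q = cF C t s b L (⌈(L : ℝ) * q⌉₊ - 1) := by
  obtain ⟨c1, c2, c3, c4⟩ := ceil_cell hL hq hq1
  have ec : ((⌈(L : ℝ) * q⌉₊ - 1 : ℕ) : ℝ) = (⌈(L : ℝ) * q⌉₊ : ℝ) - 1 := by
    rw [Nat.cast_sub c1, Nat.cast_one]
  exact cstep hL h t s ht ht' hs hs' b _ (by omega) q (by rwa [ec])
    (by rwa [ec, sub_add_cancel])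

end LinTP

/-- The dyadic-depth sequences `(Γ^{2^k}_{t,s,a,b}(p,q))_k` and
`(C^{2^k}_{t,s,a}(p))_k` are Cauchy sequences of real numbers. -/
theorem stmt_10
    (T : ℕ) (hT : 1 ≤ T) (ξ : ℕ → ℝ) (ℓ : ℕ → ℝ → ℝ) (ℓ' : ℕ → ℝ → ℝ)
    (hderiv : ∀ (t : ℕ) (x : ℝ), HasDerivAt (ℓ t) (ℓ' t x) x)
    (hlip : ∀ t : ℕ, LocallyLipschitz (ℓ' t))
    (Γ : ℕ → ℕ → ℤ → Bool → Bool → ℝ → ℝ → ℝ)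
    (C : ℕ → ℤ → ℤ → Bool → ℝ → ℝ)
    (f χ : ℕ → ℕ → ℝ)
    (hTP : ∀ L : ℕ, 1 ≤ L → IsLinearTP T L ξ ℓ' (Γ L) (C L) (f L) (χ L)) :
    ∀ t : ℕ, t < T → ∀ s : ℤ, -1 ≤ s → s < (t : ℤ) → ∀ a b : Bool,
      ∀ p : ℝ, 0 ≤ p → p ≤ 1 → ∀ q : ℝ, 0 < q → q ≤ 1 →
        CauchySeq (fun k : ℕ => Γ (2 ^ k) t s a b p q) ∧
        (0 < p → CauchySeq (fun k : ℕ => C (2 ^ k) (t : ℤ) s a p)) := by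
  classical
  have hmax : ∀ L : ℕ, 1 ≤ max L 1 := fun L => le_max_right L 1
  have hTP2 : ∀ L : ℕ, 1 ≤ L → IsLinearTP T L ξ ℓ' ((fun L => Γ (max L 1)) L)
      ((fun L => C (max L 1)) L) ((fun L => f (max L 1)) L) ((fun L => χ (max L 1)) L) := by
    intro L hL
    have e : max L 1 = L := max_eq_left hL
    simp only [e]
    exact hTP L hL
  obtain ⟨-, hS, hCs⟩ := LinTP.main_good T ξ ℓ' hlip (fun L => Γ (max L 1))
    (fun L => C (max L 1)) (fun L => f (max L 1)) (fun L => χ (max L 1)) hTP2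
    (fun t s b L j => (hTP _ (hmax L)).C_symm t s b _)
    (fun b L j => (hTP _ (hmax L)).C_base b _)
    (fun t ht b L j => (hTP _ (hmax L)).C_mixed t ht b _)
    (fun s r hsr a b L i j => (hTP _ (hmax L)).Γ_vanish s r hsr a b _ _) T le_rfl
  intro t ht s hs hst a b p hp hp1 q hq hq1
  have e2 : ∀ k : ℕ, max (2 ^ k) 1 = 2 ^ k := fun k => max_eq_left Nat.one_le_two_pow
  constructor
  · have key := LinTP.sgood_cauchy _ (hS t ht s hs hst a b) p q hp hp1 hq hq1
    refine (congrArg CauchySeq (funext fun k => ?_)).mpr key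
    have := LinTP.gF_eq (Γ := fun L => Γ (max L 1)) (C := fun L => C (max L 1))
        (f := fun L => f (max L 1)) (χ := fun L => χ (max L 1)) (T := T)
        (Nat.one_le_two_pow (n := k)) (hTP2 (2 ^ k) Nat.one_le_two_pow)
        t ht s hs hst.le a b p q hp hp1 hq hq1
    simp only [e2] at this
    exact this
  · intro hp0
    have key := LinTP.sgood_cauchy _ (hCs t s (by omega) (by omega) hs (by omega) a)
      p p hp hp1 hp0 hp1
    refine (congrArg CauchySeq (funext fun k => ?_)).mpr key
    have := LinTP.cF_eq (Γ := fun L => Γ (max L 1)) (C := fun L => C (max L 1))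
        (f := fun L => f (max L 1)) (χ := fun L => χ (max L 1)) (T := T)
        (Nat.one_le_two_pow (n := k)) (hTP2 (2 ^ k) Nat.one_le_two_pow)
        t s (by omega) (by omega) hs (by omega) a p hp0 hp1
    simp only [e2] at this
    exact this
end
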